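/- Let G=(V,w,μ,d) be a finite connected weighted graph where d is the combinatorial path distance, and let m∈ℕ. Then G is Ollivier-Betti sharp with β₁(M₂(G))=m if and only if there exist an abelian group structure · on V and generators a_1,…,a_m such that: (i) w(x,y)>0 iff y∈{a_i^ε·x : i=1,…,m, ε=±1} for all x,y; (ii) w(x,a_i·x)=w(x,a_i^{−1}·x) for all x and i; (iii) p(x,a_i^{ε₁}·x)=p(a_j^{ε₂}·x, a_i^{ε₁}·a_j^{ε₂}·x), where p(x,y)=w(x,y)/μ(x), for all x, all i≠j and ε₁,ε₂∈{−1,1}; (iv) for every v∈ℤ^m with 0<‖v‖₁≤5 one has a_1^{v_1}⋯a_m^{v_m}≠e. -/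

import Mathlib

/-!
A cycle of `X₂` consists of three edges and a geodesic of length `d(x₀, x₃) ≤ 2`, so it has length
at most five, and a harmonic form `α` is the same as a divergence-free form that is closed along
all lazy closed walks of length at most five (`X2_length`, `H1_locClosed`). This is exactly enough
for `α` to have a potential, on the unit balls around the two ends of an edge, that is Lipschitz
when `|α| ≤ 1` (`pot_lip`). McShane's extension allows such a potential in the definition of the
curvature, so non-negative curvature becomes a statement about forms: along an edge where `α` is
maximal, the divergence decreases (`div_le_of_tight`) and mass is transported along edges on which
`α` is maximal (`transport`).

**Sharpness implies the torus structure.** A nonzero harmonic form attains its maximum norm on an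
outgoing edge at *every* vertex (`max_everywhere`). Perturbing `α` by the differential of a
solution of a Poisson equation shows that its maximal edges contain a directed cycle
(`exists_tight_le`, `rays_nonempty`), and transport shows that the set of vertices from which a
maximal edge can be followed forever is closed under taking neighbours (`rays_univ`).

Evaluations at the edges leaving a fixed vertex are therefore functionals on the space of harmonic
forms such that every nonzero form attains its maximum norm with a positive sign. Linear algebra
(`paired_functionals`) gives `2 β₁ ≤ deg`, and in the case of equality these functionals are `±` the
coordinates of a basis. The resulting basis `β_1, …, β_m` takes the values `±1` on exactly two edges
at each vertex and vanishes on the others (`exists_frame`), which defines the steps `±e_i`.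
Transport for `± β_j ± β_i / 3` shows that steps in different directions commute and gives (iii)
(`Frame.square`, `Frame.p_eq`); harmonicity of `β_i` is (ii) (`Frame.w_symm`). Commuting
permutations acting transitively form an abelian group acting simply transitively, so the vertex
set becomes a group (`exists_commGroup`). A relation of length at most five is a closed walk along
which every `β_i` integrates to zero, hence is trivial (`Frame.exists_walk`), which is (iv).

**The torus structure implies sharpness.** By (iv) signed generators are distinct and a closed walk
of length at most five lifts to `ℤ^m`, so the `m` coordinate forms are closed on `X₂`; they are
divergence-free by (ii) and independent (`CombTorusCond.coordForm_mem`, `CombTorusCond.betti_eq`).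
The curvature is non-negative because by (iii) steps in directions other than that of the edge are
transported in parallel (`CombTorusCond.nonnegCurv`). As every degree is `2m`, the bound
`2 β₁ ≤ deg` gives `β₁ = m`.
-/

open Finset

namespace Paper

variable {V : Type*}

/-- Adjacency relation of a weighted graph: `x ∼ y` iff `w x y > 0`. -/
def Adj (w : V → V → ℝ) (x y : V) : Prop := 0 < w x y

/-- The axioms of a weighted graph `(V, w, μ)`: `w` symmetric, nonnegative, vanishing on the
diagonal, and `μ` positive. -/
structure IsWeightedGraph (w : V → V → ℝ) (μ : V → ℝ) : Prop where
  symm : ∀ x y, w x y = w y x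
  nonneg : ∀ x y, 0 ≤ w x y
  loopless : ∀ x, w x x = 0
  mu_pos : ∀ x, 0 < μ x

/-- Connectedness of the weighted graph. -/
def GraphConnected (w : V → V → ℝ) : Prop :=
  ∀ x y : V, ∃ (n : ℕ) (c : Fin (n + 1) → V), c 0 = x ∧ c (Fin.last n) = y ∧
    ∀ i : Fin n, Adj w (c i.castSucc) (c i.succ)

/-- `d` is a general path distance for the graph with edge weight `w`:
symmetric, vanishing exactly on the diagonal, nonnegative, and equal to the infimum of the
lengths of paths joining the two points. -/
def IsPathDistance (w : V → V → ℝ) (d : V → V → ℝ) : Prop :=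
  (∀ x y, d x y = d y x) ∧ (∀ x y, d x y = 0 ↔ x = y) ∧ (∀ x y, 0 ≤ d x y) ∧
  ∀ x y : V, IsGLB { s : ℝ |
      ∃ (n : ℕ) (c : Fin (n + 1) → V), c 0 = x ∧ c (Fin.last n) = y ∧
        (∀ i : Fin n, Adj w (c i.castSucc) (c i.succ)) ∧
        s = ∑ i : Fin n, d (c i.castSucc) (c i.succ) } (d x y)

section Finite

variable [Fintype V]

/-- The (negative) graph Laplacian `Δ f (x) = ∑_y (w x y / μ x) (f y - f x)`. -/
noncomputable def lap (w : V → V → ℝ) (μ : V → ℝ) (f : V → ℝ) (x : V) : ℝ :=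
  ∑ y, w x y / μ x * (f y - f x)

/-- The gradient `∇_{xy} f = (f x - f y)/d(x,y)`. -/
noncomputable def grad (d : V → V → ℝ) (f : V → ℝ) (x y : V) : ℝ := (f x - f y) / d x y

/-- The Lipschitz norm `‖∇ f‖_∞ = sup_{x ∼ y} |∇_{xy} f|`. -/
noncomputable def gradNorm (w d : V → V → ℝ) (f : V → ℝ) : ℝ :=
  sSup { r : ℝ | ∃ x y, Adj w x y ∧ r = |grad d f x y| }

/-- The Ollivier curvature `κ(x,y) = inf {∇_{xy} Δ f : ∇_{yx} f = 1, ‖∇ f‖_∞ = 1}`. -/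
noncomputable def kappa (w : V → V → ℝ) (μ : V → ℝ) (d : V → V → ℝ) (x y : V) : ℝ :=
  sInf { r : ℝ | ∃ f : V → ℝ, grad d f y x = 1 ∧ gradNorm w d f = 1 ∧
      r = grad d (lap w μ f) x y }

/-- Non-negative Ollivier curvature on every edge. -/
def NonnegCurv (w : V → V → ℝ) (μ : V → ℝ) (d : V → V → ℝ) : Prop :=
  ∀ x y, Adj w x y → 0 ≤ kappa w μ d x y

/-- A cycle of length `n + 3`: an injective cyclic path along edges. -/
def IsCycle {n : ℕ} (w : V → V → ℝ) (c : ZMod (n + 3) → V) : Prop :=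
  Function.Injective c ∧ ∀ i, Adj w (c i) (c (i + 1))

/-- Membership of a cycle in `X₂`: either a triangle, or
`d(x₀,x₃) < d(x₀,x₁)+d(x₁,x₂)+d(x₂,x₃)` and `x₃ ∼ … ∼ x_{n-1} ∼ x₀` is a geodesic. -/
def InX2 {n : ℕ} (w d : V → V → ℝ) (c : ZMod (n + 3) → V) : Prop :=
  n = 0 ∨
    (d (c 0) (c 3) < d (c 0) (c 1) + d (c 1) (c 2) + d (c 2) (c 3) ∧
      ∑ i ∈ Finset.univ.filter (fun i : ZMod (n + 3) => i ≠ 0 ∧ i ≠ 1 ∧ i ≠ 2),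
          d (c i) (c (i + 1)) = d (c 3) (c 0))

/-- The set of harmonic 1-forms `H₁(M₂(G))`: antisymmetric functions supported on edges
with vanishing cyclic sum along every cycle of `X₂` and vanishing divergence `δ* α`. -/
def H1set (w : V → V → ℝ) (μ : V → ℝ) (d : V → V → ℝ) : Set (V → V → ℝ) :=
  { α | (∀ x y, α x y = -α y x) ∧ (∀ x y, ¬Adj w x y → α x y = 0) ∧
      (∀ (n : ℕ) (c : ZMod (n + 3) → V), IsCycle w c → InX2 w d c →
          ∑ i, α (c i) (c (i + 1)) = 0) ∧
      (∀ x, ∑ y, w x y / μ x * α x y = 0) }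

/-- The first Betti number `β₁(M₂(G)) = dim H₁(M₂(G))`. -/
noncomputable def betti1 (w : V → V → ℝ) (μ : V → ℝ) (d : V → V → ℝ) : ℕ :=
  Module.finrank ℝ (Submodule.span ℝ (H1set w μ d))

/-- The combinatorial vertex degree. -/
noncomputable def deg (w : V → V → ℝ) (x : V) : ℕ := Nat.card { y : V // Adj w x y }

/-- The minimal combinatorial vertex degree. -/
noncomputable def degMin (w : V → V → ℝ) : ℕ := ⨅ x : V, deg w x

/-- The maximal combinatorial vertex degree. -/
noncomputable def degMax (w : V → V → ℝ) : ℕ := ⨆ x : V, deg w x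

end Finite

end Paper

namespace Paper

/-- The conditions of Corollary (Betti-sharpness for the combinatorial distance): `V` carries
an abelian group structure with generators `a_1,…,a_m` such that (i) the neighbours of `x` are
exactly the `a_i^{±1} · x`; (ii) `w(x, a_i·x) = w(x, a_i⁻¹·x)`; (iii) the transition
probabilities `p(x,y) = w(x,y)/μ(x)` are translation invariant in the other generators;
(iv) no word `a_1^{v_1} ⋯ a_m^{v_m}` with `0 < ‖v‖₁ ≤ 5` is trivial. -/
def CombTorusCond {V : Type*} [Fintype V] [CommGroup V] {m : ℕ} (a : Fin m → V)
    (w : V → V → ℝ) (μ : V → ℝ) : Prop :=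
  Subgroup.closure (Set.range a) = ⊤ ∧
  -- (i)
  (∀ x y : V, Adj w x y ↔ ∃ i, y = a i * x ∨ y = (a i)⁻¹ * x) ∧
  -- (ii)
  (∀ (x : V) (i : Fin m), w x (a i * x) = w x ((a i)⁻¹ * x)) ∧
  -- (iii)
  (∀ (x : V) (i j : Fin m) (ε₁ ε₂ : ℤ), i ≠ j →
      (ε₁ = 1 ∨ ε₁ = -1) → (ε₂ = 1 ∨ ε₂ = -1) →
      w x (a i ^ ε₁ * x) / μ x
        = w (a j ^ ε₂ * x) (a i ^ ε₁ * (a j ^ ε₂ * x)) / μ (a j ^ ε₂ * x)) ∧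
  -- (iv)
  (∀ v : Fin m → ℤ, 0 < ∑ i, |v i| → ∑ i, |v i| ≤ 5 → ∏ i, a i ^ v i ≠ 1)

end Paper

/-! ### Families of functionals closed under negation -/

namespace Paper
open Filter Topology

section LinearAlgebra
variable {W N : Type*} [AddCommGroup W] [Module ℝ W] [Fintype N]

/-- A vector in general position with respect to the functionals `e s` and `e s + e u`. -/
lemma exists_generic (e : N → W →ₗ[ℝ] ℝ) :
    ∃ g : W, (∀ s, e s ≠ 0 → e s g ≠ 0) ∧ ∀ s u, e s + e u ≠ 0 → (e s + e u) g ≠ 0 := by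
  classical
  let ι := {f : W →ₗ[ℝ] ℝ // f ≠ 0 ∧ (f ∈ Set.range e ∨
    f ∈ Set.range fun q : N × N => e q.1 + e q.2)}
  have hfin : Finite ι := by
    refine Set.Finite.subset (s := Set.range e ∪ Set.range fun q : N × N => e q.1 + e q.2)
      ((Set.finite_range _).union (Set.finite_range _)) ?_
    intro f hf
    exact hf.2
  obtain ⟨g, hg⟩ := Module.Dual.exists_forall_ne_zero_of_forall_exists (K := ℝ)
    (f := fun i : ι => (i.1 : Module.Dual ℝ W)) (by
      rintro ⟨f, hf, -⟩
      by_contra! h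
      exact hf (LinearMap.ext h))
  exact ⟨g, fun s hs => hg ⟨e s, hs, Or.inl ⟨s, rfl⟩⟩,
    fun s u hsu => hg ⟨e s + e u, hsu, Or.inr ⟨(s, u), rfl⟩⟩⟩

lemma eventually_affine_ne {A B : ℝ} (hB : B ≠ 0) : ∀ᶠ ε in 𝓝[>] (0 : ℝ), A + ε * B ≠ 0 := by
  by_cases hA : A = 0
  · filter_upwards [self_mem_nhdsWithin] with ε hε
    rw [hA, zero_add]
    exact mul_ne_zero (ne_of_gt hε) hB
  · have : Tendsto (fun ε : ℝ => A + ε * B) (𝓝[>] 0) (𝓝 (A + 0 * B)) :=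
      Tendsto.mono_left (Continuous.tendsto (by fun_prop) 0) nhdsWithin_le_nhds
    rw [zero_mul, add_zero] at this
    exact this.eventually_ne hA

/-- Functionals whose negative also occurs in the family already separate points: for a generic
vector `v` the maximum of `e s v` is attained at such an `s`, because `-v` attains it as well. -/
lemma paired_separating (e : N → W →ₗ[ℝ] ℝ)
    (he : ∀ v : W, v ≠ 0 → ∃ s, 0 < e s v ∧ ∀ u, |e u v| ≤ e s v)
    (v : W) (hv : ∀ s, (∃ u, e u = -e s) → e s v = 0) : v = 0 := by
  obtain ⟨g, -, hg⟩ := exists_generic e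
  have key : ∀ᶠ ε in 𝓝[>] (0 : ℝ), ∀ k, |e k (v + ε • g)| ≤ ε * ∑ s, |e s g| := by
    have h1 : ∀ᶠ ε in 𝓝[>] (0 : ℝ), ∀ s u, e s + e u ≠ 0 → (e s + e u) (v + ε • g) ≠ 0 := by
      refine eventually_all.2 fun s => eventually_all.2 fun u => ?_
      by_cases h : e s + e u = 0
      · simp [h]
      · filter_upwards [eventually_affine_ne (A := (e s + e u) v) (hg s u h)] with ε hε _
        rwa [map_add, map_smul, smul_eq_mul]
    filter_upwards [h1, self_mem_nhdsWithin] with ε h1 (hε : 0 < ε) k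
    have hsum : 0 ≤ ∑ s, |e s g| := Finset.sum_nonneg fun _ _ => abs_nonneg _
    by_cases h0 : v + ε • g = 0
    · rw [h0, map_zero, abs_zero]; positivity
    obtain ⟨s, -, hs⟩ := he _ h0
    obtain ⟨u, -, hu⟩ := he _ (neg_ne_zero.2 h0)
    have hsu : e s + e u = 0 := by
      by_contra hne
      refine h1 s u hne ?_
      have a1 := hs u
      have a2 := hu s
      simp only [map_neg, abs_neg, abs_le] at a1 a2
      rw [LinearMap.add_apply]
      linarith [a1.1, a1.2, a2.1, a2.2]
    have hs0 := hv s ⟨u, eq_neg_of_add_eq_zero_right hsu⟩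
    refine (hs k).trans ?_
    rw [map_add, hs0, zero_add, map_smul, smul_eq_mul]
    refine mul_le_mul_of_nonneg_left ?_ hε.le
    exact (le_abs_self _).trans
      (Finset.single_le_sum (f := fun s => |e s g|) (fun _ _ => abs_nonneg _) (mem_univ s))
  by_contra hne
  obtain ⟨k, hk, -⟩ := he v hne
  have t1 : Tendsto (fun ε : ℝ => |e k v + ε * e k g|) (𝓝[>] 0) (𝓝 |e k v + 0 * e k g|) :=
    Tendsto.mono_left (Continuous.tendsto (by fun_prop) 0) nhdsWithin_le_nhds
  have t2 : Tendsto (fun ε : ℝ => ε * ∑ s, |e s g|) (𝓝[>] 0) (𝓝 (0 * ∑ s, |e s g|)) :=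
    Tendsto.mono_left (Continuous.tendsto (by fun_prop) 0) nhdsWithin_le_nhds
  have := le_of_tendsto_of_tendsto t1 t2 (by
    filter_upwards [key] with ε h
    simpa using h k)
  rw [zero_mul, zero_mul, add_zero, abs_of_pos hk] at this
  linarith

/-- If every nonzero vector attains the maximum of `|e u v|` with a positive sign, the family has
at least `2 dim W` members; in the case of equality it consists of the coordinates of a basis
and their negatives. -/
lemma paired_functionals [FiniteDimensional ℝ W] (e : N → W →ₗ[ℝ] ℝ)
    (he : ∀ v : W, v ≠ 0 → ∃ s, 0 < e s v ∧ ∀ u, |e u v| ≤ e s v) :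
    2 * Module.finrank ℝ W ≤ Fintype.card N ∧
      ∀ m : ℕ, Module.finrank ℝ W = m → Fintype.card N ≤ 2 * m →
        ∃ b : Module.Basis (Fin m) ℝ W, ∀ u, ∃ i, e u = b.coord i ∨ e u = -b.coord i := by
  classical
  obtain ⟨g, hg, -⟩ := exists_generic e
  let P : Finset N := univ.filter fun s => (∃ u, e u = -e s) ∧ 0 < e s g
  let M : Finset N := univ.filter fun s => (∃ u, e u = -e s) ∧ e s g < 0
  have sepP : ∀ v : W, (∀ s ∈ P, e s v = 0) → v = 0 := by
    intro v hv
    refine paired_separating e he v ?_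
    rintro s ⟨u, hu⟩
    rcases lt_trichotomy (e s g) 0 with h | h | h
    · have := hv u (by
        simp only [P, mem_filter, mem_univ, true_and]
        refine ⟨⟨s, by rw [hu, neg_neg]⟩, ?_⟩
        rw [hu, LinearMap.neg_apply]; linarith)
      rw [hu, LinearMap.neg_apply] at this
      linarith
    · by_contra hne
      exact hg s (fun h0 => hne (by rw [h0]; rfl)) h
    · exact hv s (by simp only [P, mem_filter, mem_univ, true_and]; exact ⟨⟨u, hu⟩, h⟩)
  have sepM : ∀ v : W, (∀ s ∈ M, e s v = 0) → v = 0 := by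
    intro v hv
    refine sepP v ?_
    intro s hs
    simp only [P, mem_filter, mem_univ, true_and] at hs
    obtain ⟨⟨u, hu⟩, h⟩ := hs
    have := hv u (by
      simp only [M, mem_filter, mem_univ, true_and]
      refine ⟨⟨s, by rw [hu, neg_neg]⟩, ?_⟩
      rw [hu, LinearMap.neg_apply]; linarith)
    rw [hu, LinearMap.neg_apply] at this
    linarith
  let LL : (S : Finset N) → W →ₗ[ℝ] (S → ℝ) := fun S => LinearMap.pi fun s => e s.1
  have inj : ∀ S : Finset N, (∀ v : W, (∀ s ∈ S, e s v = 0) → v = 0) →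
      Function.Injective (LL S) := by
    intro S hS
    rw [← LinearMap.ker_eq_bot, LinearMap.ker_eq_bot']
    intro v hv
    exact hS v fun s hs => congrFun hv ⟨s, hs⟩
  have card : ∀ S : Finset N, (∀ v : W, (∀ s ∈ S, e s v = 0) → v = 0) →
      Module.finrank ℝ W ≤ #S := by
    intro S hS
    have := LinearMap.finrank_le_finrank_of_injective (inj S hS)
    simpa using this
  have cP := card P sepP
  have cM := card M sepM
  have disj : Disjoint P M := by
    rw [Finset.disjoint_left]
    intro s h1 h2
    simp only [P, M, mem_filter] at h1 h2
    linarith [h1.2.2, h2.2.2]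
  have cU : #P + #M ≤ Fintype.card N := by
    rw [← Finset.card_union_of_disjoint disj]
    exact Finset.card_le_univ _
  refine ⟨by omega, ?_⟩
  intro m hm hN
  have hU : P ∪ M = univ := by
    refine Finset.eq_univ_of_card _ ?_
    rw [Finset.card_union_of_disjoint disj]; omega
  have hPm : #P = m := by omega
  have heq : Module.finrank ℝ W = Module.finrank ℝ (P → ℝ) := by simp; omega
  let E : W ≃ₗ[ℝ] (P → ℝ) := LinearEquiv.ofInjectiveOfFinrankEq (LL P) (inj P sepP) heq
  let b0 : Module.Basis P ℝ W := Module.Basis.ofEquivFun E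
  have hb0 : ∀ s : P, b0.coord s = e s.1 := by
    intro s
    ext v
    simp only [b0, Module.Basis.coord_apply, Module.Basis.ofEquivFun_repr_apply]
    rfl
  let ψ : P ≃ Fin m := P.equivFinOfCardEq hPm
  refine ⟨b0.reindex ψ, fun u => ?_⟩
  have hc : ∀ s : P, (b0.reindex ψ).coord (ψ s) = e s.1 := by
    intro s
    rw [← hb0 s]
    ext v
    simp
  have hu : u ∈ P ∪ M := by rw [hU]; exact mem_univ u
  rcases Finset.mem_union.1 hu with h | h
  · exact ⟨ψ ⟨u, h⟩, Or.inl (hc ⟨u, h⟩).symm⟩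
  · simp only [M, mem_filter, mem_univ, true_and] at h
    obtain ⟨⟨t, ht⟩, hlt⟩ := h
    have htP : t ∈ P := by
      simp only [P, mem_filter, mem_univ, true_and]
      refine ⟨⟨u, by rw [ht, neg_neg]⟩, ?_⟩
      rw [ht, LinearMap.neg_apply]; linarith
    exact ⟨ψ ⟨t, htP⟩, Or.inr (by rw [hc ⟨t, htP⟩]; rw [ht, neg_neg])⟩

end LinearAlgebra
end Paper

/-! ### Combinatorial distance and closed forms -/

namespace Paper
open Filter Topology

section Graph
variable {V : Type*}

lemma inj3 {a b c : V} (h1 : a ≠ b) (h2 : b ≠ c) (h3 : c ≠ a) :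
    Function.Injective ![a, b, c] := by
  intro i j hij
  fin_cases i <;> fin_cases j <;> first | rfl | (exfalso; simp at hij; grind)

lemma inj4 {a b c e : V} (h1 : a ≠ b) (h2 : b ≠ c) (h3 : c ≠ e) (h4 : e ≠ a) (h5 : a ≠ c)
    (h6 : b ≠ e) : Function.Injective ![a, b, c, e] := by
  intro i j hij
  fin_cases i <;> fin_cases j <;> first | rfl | (exfalso; simp at hij; grind)

lemma inj5 {a b c e f : V} (h1 : a ≠ b) (h2 : b ≠ c) (h3 : c ≠ e) (h4 : e ≠ f) (h5 : f ≠ a)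
    (h6 : a ≠ c) (h7 : b ≠ e) (h8 : c ≠ f) (h9 : e ≠ a) (h10 : b ≠ f) :
    Function.Injective ![a, b, c, e, f] := by
  intro i j hij
  fin_cases i <;> fin_cases j <;> first | rfl | (exfalso; simp at hij; grind)

/-- The standing hypotheses: a connected weighted graph with its combinatorial distance. -/
structure CombGraph (w : V → V → ℝ) (μ : V → ℝ) (d : V → V → ℝ) : Prop where
  graph : IsWeightedGraph w μ
  conn : GraphConnected w
  dist : IsPathDistance w d
  comb : ∀ x y, Adj w x y → d x y = 1

/-- A lazy step: either stay put or move along an edge. -/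
def Lazy (w : V → V → ℝ) (x y : V) : Prop := x = y ∨ Adj w x y

/-- The underlying simple graph. -/
def toSimple (w : V → V → ℝ) : SimpleGraph V := SimpleGraph.fromRel (Adj w)

variable {w : V → V → ℝ} {μ : V → ℝ} {d : V → V → ℝ}

namespace CombGraph

lemma adj_symm (H : CombGraph w μ d) {x y : V} (h : Adj w x y) : Adj w y x := by
  unfold Adj at *
  rwa [H.graph.symm]

lemma ne (H : CombGraph w μ d) {x y : V} (h : Adj w x y) : x ≠ y := by
  rintro rfl
  unfold Adj at h
  rw [H.graph.loopless] at h
  exact lt_irrefl _ h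

lemma lazy_symm (H : CombGraph w μ d) {x y : V} (h : Lazy w x y) : Lazy w y x :=
  h.imp Eq.symm H.adj_symm

lemma simple_adj (H : CombGraph w μ d) {x y : V} : (toSimple w).Adj x y ↔ Adj w x y := by
  simp only [toSimple, SimpleGraph.fromRel_adj]
  exact ⟨fun h => h.2.elim id H.adj_symm, fun h => ⟨H.ne h, Or.inl h⟩⟩

lemma exists_walk (H : CombGraph w μ d) (n : ℕ) (c : Fin (n + 1) → V)
    (h : ∀ i : Fin n, Adj w (c i.castSucc) (c i.succ)) :
    ∃ p : (toSimple w).Walk (c 0) (c (Fin.last n)), p.length = n := by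
  induction n with
  | zero => exact ⟨SimpleGraph.Walk.nil, rfl⟩
  | succ n ih =>
    obtain ⟨p, hp⟩ := ih (fun i => c i.succ) (fun i => h i.succ)
    have h0 : (toSimple w).Adj (c 0) (c (0 : Fin (n+1)).succ) := H.simple_adj.2 (h 0)
    exact ⟨SimpleGraph.Walk.cons h0 p, (SimpleGraph.Walk.length_cons h0 p).trans (by rw [hp])⟩

lemma simple_conn [Nonempty V] (H : CombGraph w μ d) : (toSimple w).Connected := by
  refine ⟨fun x y => ?_⟩
  obtain ⟨n, c, rfl, rfl, h⟩ := H.conn x y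
  obtain ⟨p, -⟩ := H.exists_walk n c h
  exact ⟨p⟩

/-- The distance is that of the underlying simple graph; in particular it is integer-valued. -/
lemma d_eq [Nonempty V] (H : CombGraph w μ d) (x y : V) : d x y = (toSimple w).dist x y := by
  refine (H.dist.2.2.2 x y).unique (IsLeast.isGLB ⟨?_, ?_⟩)
  · obtain ⟨p, hp⟩ := H.simple_conn.exists_walk_length_eq_dist x y
    have hadj : ∀ i : Fin p.length, Adj w (p.getVert i) (p.getVert (i + 1)) := fun i =>
      H.simple_adj.1 (p.adj_getVert_succ i.2)
    refine ⟨p.length, fun i => p.getVert i, by simp, by simp, fun i => by simpa using hadj i, ?_⟩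
    rw [← hp, Finset.sum_congr rfl (fun i _ => H.comb _ _ (by simpa using hadj i))]
    simp
  · rintro s ⟨n, c, rfl, rfl, h, rfl⟩
    obtain ⟨p, hp⟩ := H.exists_walk n c h
    rw [Finset.sum_congr rfl (fun i _ => H.comb _ _ (h i))]
    have := SimpleGraph.dist_le p
    rw [hp] at this
    simpa using this

lemma d_triangle [Nonempty V] (H : CombGraph w μ d) (x y z : V) : d x z ≤ d x y + d y z := by
  rw [H.d_eq, H.d_eq, H.d_eq]
  exact_mod_cast H.simple_conn.dist_triangle

lemma d_self [Nonempty V] (H : CombGraph w μ d) (x : V) : d x x = 0 := (H.dist.2.1 x x).2 rfl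

lemma d_lazy [Nonempty V] (H : CombGraph w μ d) {x y : V} (h : Lazy w x y) : d x y ≤ 1 := by
  rcases h with rfl | h
  · rw [H.d_self]; norm_num
  · rw [H.comb _ _ h]

/-- A distance below three is realized by an explicit path. -/
lemma d_cases [Nonempty V] (H : CombGraph w μ d) (x y : V) :
    (x = y ∧ d x y = 0) ∨ (Adj w x y ∧ d x y = 1) ∨
      (∃ z, Adj w x z ∧ Adj w z y ∧ d x y = 2) ∨ 3 ≤ d x y := by
  obtain ⟨p, hp⟩ := H.simple_conn.exists_walk_length_eq_dist x y
  rw [H.d_eq, ← hp]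
  rcases p with _ | ⟨h1, p⟩
  · left; simp
  rcases p with _ | ⟨h2, p⟩
  · right; left; exact ⟨H.simple_adj.1 h1, by simp⟩
  rcases p with _ | ⟨h3, p⟩
  · right; right; left; exact ⟨_, H.simple_adj.1 h1, H.simple_adj.1 h2, by norm_num⟩
  · right; right; right
    simp only [SimpleGraph.Walk.length_cons]
    push_cast
    have : (0 : ℝ) ≤ p.length := Nat.cast_nonneg _
    linarith

lemma two_le_d [Nonempty V] (H : CombGraph w μ d) {x y : V} (h : ¬ Lazy w x y) : 2 ≤ d x y := by
  rcases H.d_cases x y with h' | h' | ⟨_, _, _, h'⟩ | h'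
  · exact absurd (Or.inl h'.1) h
  · exact absurd (Or.inr h'.1) h
  · exact h'.ge
  · linarith

end CombGraph

/-- An antisymmetric function on edges whose sum vanishes along closed lazy walks of length at
most five; equivalently, a form closed on all cycles of length three, four and five. -/
structure LocClosed (w : V → V → ℝ) (α : V → V → ℝ) : Prop where
  anti : ∀ x y, α x y = -α y x
  supp : ∀ x y, ¬Adj w x y → α x y = 0
  pent : ∀ a b c e f, Lazy w a b → Lazy w b c → Lazy w c e → Lazy w e f → Lazy w f a →
    α a b + α b c + α c e + α e f + α f a = 0

namespace LocClosed
variable {α : V → V → ℝ}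

lemma self (hα : LocClosed w α) (x : V) : α x x = 0 := by
  have := hα.anti x x
  linarith

lemma tri (hα : LocClosed w α) {a b c : V} (h1 : Lazy w a b) (h2 : Lazy w b c)
    (h3 : Lazy w c a) : α a b + α b c + α c a = 0 := by
  have := hα.pent a b c c c h1 h2 (Or.inl rfl) (Or.inl rfl) h3
  rw [hα.self] at this
  linarith

lemma quad (hα : LocClosed w α) {a b c e : V} (h1 : Lazy w a b) (h2 : Lazy w b c)
    (h3 : Lazy w c e) (h4 : Lazy w e a) : α a b + α b c + α c e + α e a = 0 := by
  have := hα.pent a b c e e h1 h2 h3 (Or.inl rfl) h4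
  rw [hα.self] at this
  linarith

end LocClosed

/-- A cycle of `X₂` has length at most five, since its geodesic part has length `d(x₀, x₃) < 3`. -/
lemma X2_length [Nonempty V] (H : CombGraph w μ d) {n : ℕ} {c : ZMod (n + 3) → V}
    (hc : IsCycle w c) (hX : InX2 w d c) : n ≤ 2 := by
  rcases hX with rfl | ⟨h1, h2⟩
  · omega
  have hstep : ∀ i, d (c i) (c (i + 1)) = 1 := fun i => H.comb _ _ (hc.2 i)
  rw [Finset.sum_congr rfl (fun i _ => hstep i), Finset.sum_const, nsmul_eq_mul, mul_one] at h2
  have a1 := hstep 0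
  have a2 := hstep 1
  have a3 := hstep 2
  rw [zero_add] at a1
  rw [one_add_one_eq_two] at a2
  rw [show (2 : ZMod (n + 3)) + 1 = 3 by norm_num] at a3
  rw [a1, a2, a3, H.dist.1 (c 0), ← h2] at h1
  have hcard : n ≤ #(univ.filter fun i : ZMod (n + 3) => i ≠ 0 ∧ i ≠ 1 ∧ i ≠ 2) := by
    have : (univ.filter fun i : ZMod (n + 3) => i ≠ 0 ∧ i ≠ 1 ∧ i ≠ 2) = univ \ {0, 1, 2} := by
      ext i; simp
    rw [this]
    have h := Finset.le_card_sdiff ({0, 1, 2} : Finset (ZMod (n + 3))) univ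
    rw [Finset.card_univ, ZMod.card] at h
    have h3 := Finset.card_le_three (a := (0 : ZMod (n + 3))) (b := 1) (c := 2)
    omega
  have : (n : ℝ) < 3 := by
    have : (n : ℝ) ≤ #(univ.filter fun i : ZMod (n + 3) => i ≠ 0 ∧ i ≠ 1 ∧ i ≠ 2) := by
      exact_mod_cast hcard
    linarith
  have : n < 3 := by exact_mod_cast this
  omega

section H1
variable [Fintype V] {α : V → V → ℝ}

/-- Harmonic forms are closed on lazy closed walks of length five: such a walk reduces to cycles of
length three, four or five, and a five-cycle is in `X₂` unless a chord splits it. -/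
lemma H1_locClosed [Nonempty V] (H : CombGraph w μ d) (hα : α ∈ H1set w μ d) :
    LocClosed w α := by
  obtain ⟨anti, supp, cyc, -⟩ := hα
  have self : ∀ x, α x x = 0 := fun x => by have := anti x x; linarith
  have tri : ∀ a b c, Lazy w a b → Lazy w b c → Lazy w c a → α a b + α b c + α c a = 0 := by
    intro a b c h1 h2 h3
    rcases h1 with rfl | h1
    · rw [self, anti c a]; ring
    rcases h2 with rfl | h2
    · rw [self, anti b a]; ring
    rcases h3 with rfl | h3
    · rw [self, anti c b]; ring
    have := cyc 0 (![a, b, c] : Fin 3 → V) ⟨inj3 (H.ne h1) (H.ne h2) (H.ne h3), by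
      intro i
      change Fin 3 at i
      fin_cases i
      · exact h1
      · exact h2
      · exact h3⟩ (Or.inl rfl)
    change ∑ i : Fin 3, α ((![a, b, c] : Fin 3 → V) i) ((![a, b, c] : Fin 3 → V) (i + 1)) = 0
      at this
    rw [Fin.sum_univ_three] at this
    exact this
  have quad : ∀ a b c e, Lazy w a b → Lazy w b c → Lazy w c e → Lazy w e a →
      α a b + α b c + α c e + α e a = 0 := by
    intro a b c e h1 h2 h3 h4
    rcases h1 with rfl | h1
    · rw [self]; linarith [tri _ _ _ h2 h3 h4]
    rcases h2 with rfl | h2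
    · rw [self]; linarith [tri _ _ _ (Or.inr h1) h3 h4]
    rcases h3 with rfl | h3
    · rw [self]; linarith [tri _ _ _ (Or.inr h1) (Or.inr h2) h4]
    rcases h4 with rfl | h4
    · rw [self]; linarith [tri _ _ _ (Or.inr h1) (Or.inr h2) (Or.inr h3)]
    by_cases e1 : a = c
    · subst e1; linarith [anti a b, anti a e]
    by_cases e2 : b = e
    · subst e2; linarith [anti a b, anti b c]
    have := cyc 1 (![a, b, c, e] : Fin 4 → V) ⟨inj4 (H.ne h1) (H.ne h2) (H.ne h3) (H.ne h4) e1 e2, by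
      intro i
      change Fin 4 at i
      fin_cases i
      · exact h1
      · exact h2
      · exact h3
      · exact h4⟩ (Or.inr ⟨by
        change d a e < d a b + d b c + d c e
        rw [H.comb _ _ h1, H.comb _ _ h2, H.comb _ _ h3, H.dist.1, H.comb _ _ h4]
        norm_num, by
        have : (univ.filter fun i : ZMod (1 + 3) => i ≠ 0 ∧ i ≠ 1 ∧ i ≠ 2) = {3} := by decide
        rw [this, Finset.sum_singleton]
        rfl⟩)
    change ∑ i : Fin 4, α ((![a, b, c, e] : Fin 4 → V) i) ((![a, b, c, e] : Fin 4 → V) (i + 1)) = 0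
      at this
    rw [Fin.sum_univ_four] at this
    exact this
  refine ⟨anti, supp, ?_⟩
  intro a b c e f h1 h2 h3 h4 h5
  rcases h1 with rfl | h1
  · rw [self]; linarith [quad _ _ _ _ h2 h3 h4 h5]
  rcases h2 with rfl | h2
  · rw [self]; linarith [quad _ _ _ _ (Or.inr h1) h3 h4 h5]
  rcases h3 with rfl | h3
  · rw [self]; linarith [quad _ _ _ _ (Or.inr h1) (Or.inr h2) h4 h5]
  rcases h4 with rfl | h4
  · rw [self]; linarith [quad _ _ _ _ (Or.inr h1) (Or.inr h2) (Or.inr h3) h5]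
  rcases h5 with rfl | h5
  · rw [self]; linarith [quad _ _ _ _ (Or.inr h1) (Or.inr h2) (Or.inr h3) (Or.inr h4)]
  by_cases e1 : a = c
  · subst e1; linarith [anti a b, tri _ _ _ (Or.inr h3) (Or.inr h4) (Or.inr h5)]
  by_cases e2 : b = e
  · subst e2; linarith [anti b c, tri _ _ _ (Or.inr h1) (Or.inr h4) (Or.inr h5)]
  by_cases e3 : c = f
  · subst e3; linarith [anti c e, tri _ _ _ (Or.inr h1) (Or.inr h2) (Or.inr h5)]
  by_cases e4 : Lazy w e a
  · linarith [anti e a, tri _ _ _ (Or.inr h4) (Or.inr h5) (H.lazy_symm e4),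
      quad _ _ _ _ (Or.inr h1) (Or.inr h2) (Or.inr h3) e4]
  by_cases e5 : b = f
  · subst e5; linarith [anti a b, tri _ _ _ (Or.inr h2) (Or.inr h3) (Or.inr h4)]
  have e6 : e ≠ a := fun h => e4 (Or.inl h)
  have dle : d e a ≤ 2 := by
    have := H.d_triangle e f a
    rwa [H.comb _ _ h4, H.comb _ _ h5, one_add_one_eq_two] at this
  have dge := H.two_le_d e4
  have := cyc 2 (![a, b, c, e, f] : Fin 5 → V) ⟨inj5 (H.ne h1) (H.ne h2) (H.ne h3) (H.ne h4) (H.ne h5)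
      e1 e2 e3 e6 e5, by
    intro i
    change Fin 5 at i
    fin_cases i
    · exact h1
    · exact h2
    · exact h3
    · exact h4
    · exact h5⟩ (Or.inr ⟨by
      change d a e < d a b + d b c + d c e
      rw [H.comb _ _ h1, H.comb _ _ h2, H.comb _ _ h3, H.dist.1]
      linarith, by
      have : (univ.filter fun i : ZMod (2 + 3) => i ≠ 0 ∧ i ≠ 1 ∧ i ≠ 2) = {3, 4} := by decide
      rw [this, Finset.sum_pair (by decide)]
      change d e f + d f a = d e a
      rw [H.comb _ _ h4, H.comb _ _ h5]
      linarith⟩)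
  change ∑ i : Fin 5, α ((![a, b, c, e, f] : Fin 5 → V) i)
    ((![a, b, c, e, f] : Fin 5 → V) (i + 1)) = 0 at this
  rw [Fin.sum_univ_five] at this
  exact this

end H1
end Graph
end Paper

/-! ### Curvature and local potentials -/

namespace Paper
open Filter Topology

section Curvature
variable {V : Type*} {w : V → V → ℝ} {μ : V → ℝ} {d : V → V → ℝ} {α : V → V → ℝ}

/-- The local potential of `α` near the edge `(x, y)`, normalized to vanish at `x`. -/
noncomputable def pot (w : V → V → ℝ) (α : V → V → ℝ) (x y v : V) : ℝ :=
  open Classical in if Lazy w x v then α x v else α x y + α y v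

lemma pot_left {x y v : V} (h : Lazy w x v) : pot w α x y v = α x v := by
  unfold pot; rw [if_pos h]

lemma pot_right (H : CombGraph w μ d) (hα : LocClosed w α) {x y v : V} (hxy : Adj w x y)
    (h : Lazy w y v) : pot w α x y v = α x y + α y v := by
  unfold pot
  split_ifs with h'
  · have := hα.tri h' (H.lazy_symm h) (Or.inr (H.adj_symm hxy))
    linarith [hα.anti v y, hα.anti y x]
  · rfl

/-- The potential is a potential along lazy steps, as all closed lazy walks involved have length
at most five. -/
lemma pot_step (H : CombGraph w μ d) (hα : LocClosed w α) {x y u z v : V} (hxy : Adj w x y)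
    (hu : Lazy w x u ∨ Lazy w y u) (hv : Lazy w x v ∨ Lazy w y v)
    (h1 : Lazy w u z) (h2 : Lazy w z v) :
    pot w α x y v - pot w α x y u = α u z + α z v := by
  rcases hu with hu | hu <;> rcases hv with hv | hv
  · rw [pot_left hu, pot_left hv]
    have := hα.quad hu h1 h2 (H.lazy_symm hv)
    linarith [hα.anti v x]
  · rw [pot_left hu, pot_right H hα hxy hv]
    have := hα.pent _ _ _ _ _ hu h1 h2 (H.lazy_symm hv) (Or.inr (H.adj_symm hxy))
    linarith [hα.anti v y, hα.anti y x]
  · rw [pot_left hv, pot_right H hα hxy hu]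
    have := hα.pent _ _ _ _ _ (Or.inr hxy) hu h1 h2 (H.lazy_symm hv)
    linarith [hα.anti v x]
  · rw [pot_right H hα hxy hv, pot_right H hα hxy hu]
    have := hα.quad hu h1 h2 (H.lazy_symm hv)
    linarith [hα.anti v y]

lemma pot_lip [Nonempty V] (H : CombGraph w μ d) (hα : LocClosed w α) (hle : ∀ u v, α u v ≤ 1)
    {x y u v : V} (hxy : Adj w x y) (hu : Lazy w x u ∨ Lazy w y u)
    (hv : Lazy w x v ∨ Lazy w y v) : pot w α x y u - pot w α x y v ≤ d u v := by
  rw [H.dist.1]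
  rcases H.d_cases v u with ⟨h, e⟩ | ⟨h, e⟩ | ⟨z, h1, h2, e⟩ | e
  · rw [e, h, sub_self]
  · rw [pot_step H hα hxy hv hu (Or.inl rfl) (Or.inr h), e, hα.self, zero_add]
    exact hle _ _
  · rw [pot_step H hα hxy hv hu (Or.inr h1) (Or.inr h2), e]
    linarith [hle v z, hle z u]
  · refine le_trans ?_ e
    have hge : ∀ u v, -1 ≤ α u v := fun u v => by linarith [hα.anti u v, hle v u]
    have a1 := hle x y
    have a0 := hge x y
    rcases hu with hu | hu <;> rcases hv with hv | hv
    · rw [pot_left hu, pot_left hv]; linarith [hle x u, hge x v]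
    · rw [pot_left hu, pot_right H hα hxy hv]; linarith [hle x u, hge y v]
    · rw [pot_left hv, pot_right H hα hxy hu]; linarith [hle y u, hge x v]
    · rw [pot_right H hα hxy hv, pot_right H hα hxy hu]; linarith [hle y u, hge y v]

lemma pot_diff (H : CombGraph w μ d) (hα : LocClosed w α) {x y : V} (hxy : Adj w x y)
    (htight : α x y = 1) : pot w α x y y - pot w α x y x = 1 := by
  rw [pot_left (Or.inl rfl), pot_right H hα hxy (Or.inl rfl), hα.self, hα.self, htight]; ring

namespace CombGraph

lemma p_nonneg (H : CombGraph w μ d) (x y : V) : 0 ≤ w x y / μ x :=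
  div_nonneg (H.graph.nonneg x y) (H.graph.mu_pos x).le

lemma p_pos (H : CombGraph w μ d) {x y : V} (h : Adj w x y) : 0 < w x y / μ x :=
  div_pos h (H.graph.mu_pos x)

lemma p_zero (H : CombGraph w μ d) {x y : V} (h : ¬Adj w x y) : w x y / μ x = 0 := by
  rw [le_antisymm (not_lt.1 h) (H.graph.nonneg x y), zero_div]

lemma gradNorm_eq_one (H : CombGraph w μ d) {x y : V} (hxy : Adj w x y) {f : V → ℝ}
    (hf : ∀ u v, Adj w u v → f u - f v ≤ 1) (hfxy : f y - f x = 1) : gradNorm w d f = 1 := by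
  refine IsGreatest.csSup_eq ⟨⟨y, x, H.adj_symm hxy, ?_⟩, ?_⟩
  · rw [grad, H.comb _ _ (H.adj_symm hxy), hfxy]; norm_num
  · rintro r ⟨u, v, huv, rfl⟩
    rw [grad, H.comb _ _ huv, div_one, abs_le]
    constructor
    · linarith [hf v u (H.adj_symm huv)]
    · exact hf u v huv

variable [Fintype V]

lemma lip_of_gradNorm (H : CombGraph w μ d) {f : V → ℝ} (hf : gradNorm w d f = 1) {u v : V}
    (huv : Adj w u v) : |f u - f v| ≤ 1 := by
  have hfin : {r : ℝ | ∃ x y, Adj w x y ∧ r = |grad d f x y|}.Finite := by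
    refine (Set.finite_range fun q : V × V => |grad d f q.1 q.2|).subset ?_
    rintro r ⟨x, y, -, rfl⟩
    exact ⟨(x, y), rfl⟩
  have : |grad d f u v| ≤ 1 := by
    rw [← hf]
    exact le_csSup hfin.bddAbove ⟨u, v, huv, rfl⟩
  rwa [grad, H.comb _ _ huv, div_one] at this

lemma abs_lap_le (H : CombGraph w μ d) {f : V → ℝ} (hf : gradNorm w d f = 1) (x : V) :
    |lap w μ f x| ≤ ∑ y, w x y / μ x := by
  refine (Finset.abs_sum_le_sum_abs _ _).trans (Finset.sum_le_sum fun y _ => ?_)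
  rw [abs_mul, abs_of_nonneg (H.p_nonneg x y)]
  by_cases h : Adj w x y
  · have := H.lip_of_gradNorm hf (H.adj_symm h)
    exact mul_le_of_le_one_right (H.p_nonneg x y) this
  · rw [H.p_zero h, zero_mul]

/-- Non-negative curvature, unfolded: the Laplacian of a `1`-Lipschitz function decreases along
an edge of slope one. -/
lemma curv_global (H : CombGraph w μ d) (hκ : NonnegCurv w μ d) {x y : V} (hxy : Adj w x y)
    {f : V → ℝ} (hf : ∀ u v, Adj w u v → f u - f v ≤ 1) (hfxy : f y - f x = 1) :
    lap w μ f y ≤ lap w μ f x := by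
  have hbdd : BddBelow { r : ℝ | ∃ f : V → ℝ, grad d f y x = 1 ∧ gradNorm w d f = 1 ∧
      r = grad d (lap w μ f) x y } := by
    refine ⟨-(∑ z, w x z / μ x) - ∑ z, w y z / μ y, ?_⟩
    rintro r ⟨f, -, h, rfl⟩
    rw [grad, H.comb _ _ hxy, div_one]
    have h1 := abs_le.1 (H.abs_lap_le h x)
    have h2 := abs_le.1 (H.abs_lap_le h y)
    linarith [h1.1, h2.2]
  have h1 : grad d (lap w μ f) x y ∈ { r : ℝ | ∃ f : V → ℝ, grad d f y x = 1 ∧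
      gradNorm w d f = 1 ∧ r = grad d (lap w μ f) x y } :=
    ⟨f, by rw [grad, H.comb _ _ (H.adj_symm hxy), hfxy, div_one],
      H.gradNorm_eq_one hxy hf hfxy, rfl⟩
  have h2 := (hκ x y hxy).trans (csInf_le hbdd h1)
  rw [grad, H.comb _ _ hxy, div_one] at h2
  linarith

/-- It suffices to compare Laplacians of `1`-Lipschitz functions along edges of slope one. -/
lemma nonneg_of (H : CombGraph w μ d)
    (h : ∀ x y, Adj w x y → ∀ f : V → ℝ, (∀ u v, Adj w u v → f u - f v ≤ 1) → f y - f x = 1 →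
      lap w μ f y ≤ lap w μ f x) : NonnegCurv w μ d := by
  intro x y hxy
  refine Real.sInf_nonneg ?_
  rintro r ⟨f, h1, h2, rfl⟩
  rw [grad, H.comb _ _ (H.adj_symm hxy), div_one] at h1
  rw [grad, H.comb _ _ hxy, div_one, sub_nonneg]
  exact h x y hxy f (fun u v huv => (le_abs_self _).trans (H.lip_of_gradNorm h2 huv)) h1

/-- The localized form: the Lipschitz bound is needed only on `B₁(x) ∪ B₁(y)`, since McShane's
extension does not change the Laplacian at `x` and `y`. -/
lemma curv_local [Nonempty V] (H : CombGraph w μ d) (hκ : NonnegCurv w μ d) {x y : V}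
    (hxy : Adj w x y) {F : V → ℝ}
    (hF : ∀ u v, (Lazy w x u ∨ Lazy w y u) → (Lazy w x v ∨ Lazy w y v) → F u - F v ≤ d u v)
    (hFxy : F y - F x = 1) : lap w μ F y ≤ lap w μ F x := by
  classical
  let B : Finset V := univ.filter fun u => Lazy w x u ∨ Lazy w y u
  have hB : B.Nonempty := ⟨x, Finset.mem_filter.2 ⟨Finset.mem_univ _, Or.inl (Or.inl rfl)⟩⟩
  let f : V → ℝ := fun z => B.inf' hB fun v => F v + d v z
  have hfF : ∀ u, (Lazy w x u ∨ Lazy w y u) → f u = F u := by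
    intro u hu
    refine le_antisymm ?_ ?_
    · refine (Finset.inf'_le _ (by simpa [B] using hu : u ∈ B)).trans ?_
      rw [H.d_self, add_zero]
    · refine Finset.le_inf' _ _ fun v hv => ?_
      have := hF u v hu (by simpa [B] using hv)
      rw [H.dist.1] at this
      linarith
  have hlip : ∀ u v, Adj w u v → f u - f v ≤ 1 := by
    intro u v huv
    obtain ⟨b, hb, hbv⟩ := Finset.exists_mem_eq_inf' hB fun b => F b + d b v
    have h1 : f u ≤ F b + d b u := Finset.inf'_le _ hb
    have h2 : f v = F b + d b v := hbv
    have h3 := H.d_triangle b v u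
    rw [H.comb _ _ (H.adj_symm huv)] at h3
    linarith
  have hx : f x = F x := hfF x (Or.inl (Or.inl rfl))
  have hy : f y = F y := hfF y (Or.inr (Or.inl rfl))
  have hlap : ∀ z, z = x ∨ z = y → lap w μ f z = lap w μ F z := by
    intro z hz
    refine Finset.sum_congr rfl fun v _ => ?_
    by_cases h : Adj w z v
    · rcases hz with rfl | rfl
      · rw [hx, hfF v (Or.inl (Or.inr h))]
      · rw [hy, hfF v (Or.inr (Or.inr h))]
    · rw [H.p_zero h, zero_mul, zero_mul]
  rw [← hlap x (Or.inl rfl), ← hlap y (Or.inr rfl)]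
  exact H.curv_global hκ hxy hlip (by rw [hx, hy, hFxy])

end CombGraph

variable [Fintype V]
lemma lap_pot_left (H : CombGraph w μ d) (hα : LocClosed w α) (x y : V) :
    lap w μ (pot w α x y) x = ∑ z, w x z / μ x * α x z := by
  refine Finset.sum_congr rfl fun z _ => ?_
  by_cases h : Adj w x z
  · rw [pot_left (Or.inr h), pot_left (Or.inl rfl), hα.self, sub_zero]
  · rw [H.p_zero h, zero_mul, zero_mul]

lemma lap_pot_right (H : CombGraph w μ d) (hα : LocClosed w α) {x y : V} (hxy : Adj w x y) :
    lap w μ (pot w α x y) y = ∑ z, w y z / μ y * α y z := by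
  refine Finset.sum_congr rfl fun z _ => ?_
  by_cases h : Adj w y z
  · rw [pot_right H hα hxy (Or.inr h), pot_right H hα hxy (Or.inl rfl), hα.self]; ring
  · rw [H.p_zero h, zero_mul, zero_mul]

/-- The divergence of a closed form decreases along an edge where the form is maximal. -/
lemma div_le_of_tight [Nonempty V] (H : CombGraph w μ d) (hκ : NonnegCurv w μ d)
    (hα : LocClosed w α) (hle : ∀ u v, α u v ≤ 1) {x y : V} (hxy : Adj w x y)
    (htight : α x y = 1) :
    ∑ z, w y z / μ y * α y z ≤ ∑ z, w x z / μ x * α x z := by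
  rw [← lap_pot_left H hα x y, ← lap_pot_right H hα hxy]
  exact H.curv_local hκ hxy (fun u v hu hv => pot_lip H hα hle hxy hu hv)
    (pot_diff H hα hxy htight)

/-- Mass transport for a form harmonic at both ends of a maximal edge `(x, y)`: with
`U` the set of points reached from `x'` at full slope, `x` sends at most as much mass
to `U` as `y` does. -/
lemma transport [Nonempty V] (H : CombGraph w μ d) (hκ : NonnegCurv w μ d)
    (hα : LocClosed w α) (hle : ∀ u v, α u v ≤ 1)
    (hdiv : ∀ x, ∑ z, w x z / μ x * α x z = 0) {x y x' : V} (hxy : Adj w x y)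
    (htight : α x y = 1) (hx' : Adj w x x')
    (U : Set V) (hU : ∀ v, v ∈ U ↔ pot w α x y v = pot w α x y x' + d x' v)
    (hxU : x ∉ U) (hyU : y ∉ U) :
    ∑ z, w x z / μ x * U.indicator 1 z ≤ ∑ z, w y z / μ y * U.indicator 1 z := by
  classical
  set F := pot w α x y with hFdef
  have hlip : ∀ u v, (Lazy w x u ∨ Lazy w y u) → (Lazy w x v ∨ Lazy w y v) →
      F u - F v ≤ d u v := fun u v hu hv => pot_lip H hα hle hxy hu hv
  -- lowering `F` on `U` by a small `ε` keeps the Lipschitz bound, because `U` is closed under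
  -- passing to points reached at full slope
  have hε : ∀ᶠ ε in 𝓝[>] (0 : ℝ), ∀ u v, u ∈ U → v ∉ U → (Lazy w x u ∨ Lazy w y u) →
      (Lazy w x v ∨ Lazy w y v) → F v - F u + ε ≤ d v u := by
    refine eventually_all.2 fun u => eventually_all.2 fun v => ?_
    by_cases h : u ∈ U ∧ v ∉ U ∧ (Lazy w x u ∨ Lazy w y u) ∧ (Lazy w x v ∨ Lazy w y v)
    · obtain ⟨hu, hv, hu', hv'⟩ := h
      have hlt : F v - F u < d v u := by
        refine lt_of_le_of_ne (hlip v u hv' hu') fun heq => hv ((hU v).2 ?_)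
        have h1 := (hU u).1 hu
        have h2 := hlip v x' hv' (Or.inl (Or.inr hx'))
        have h3 := H.d_triangle x' u v
        rw [H.dist.1] at h2 heq
        linarith
      have hpos : 0 < d v u - (F v - F u) := sub_pos.2 hlt
      filter_upwards [Ioo_mem_nhdsGT hpos] with ε hε _ _ _ _
      linarith [hε.2]
    · filter_upwards with ε h1 h2 h3 h4
      exact absurd ⟨h1, h2, h3, h4⟩ h
  obtain ⟨ε, h1, h0⟩ := (hε.and self_mem_nhdsWithin).exists
  replace h0 : 0 < ε := h0
  let F' : V → ℝ := fun v => F v - ε * U.indicator 1 v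
  have hlip' : ∀ u v, (Lazy w x u ∨ Lazy w y u) → (Lazy w x v ∨ Lazy w y v) →
      F' u - F' v ≤ d u v := by
    intro u v hu hv
    have := hlip u v hu hv
    by_cases a : u ∈ U <;> by_cases b : v ∈ U <;> simp only [F', a, b,
      Set.indicator_of_mem, Set.indicator_of_notMem, not_false_eq_true, Pi.one_apply]
    · linarith
    · linarith
    · linarith [h1 v u b a hv hu]
    · linarith
  have hx0 : U.indicator (1 : V → ℝ) x = 0 := Set.indicator_of_notMem hxU _
  have hy0 : U.indicator (1 : V → ℝ) y = 0 := Set.indicator_of_notMem hyU _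
  have hlap : ∀ a, U.indicator (1 : V → ℝ) a = 0 → lap w μ F' a =
      lap w μ F a - ε * ∑ z, w a z / μ a * U.indicator 1 z := by
    intro a ha
    simp only [lap, F', ha]
    rw [Finset.mul_sum, ← Finset.sum_sub_distrib]
    refine Finset.sum_congr rfl fun z _ => ?_
    ring
  have key := H.curv_local hκ hxy hlip' (by
    simp only [F', hx0, hy0]
    linarith [pot_diff H hα hxy htight])
  rw [hlap x hx0, hlap y hy0, hFdef, lap_pot_left H hα, lap_pot_right H hα hxy, hdiv, hdiv] at key
  have : ε * ∑ z, w x z / μ x * U.indicator 1 z ≤ ε * ∑ z, w y z / μ y * U.indicator 1 z := by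
    linarith
  exact le_of_mul_le_mul_left this h0

end Curvature
end Paper

/-! ### Maximal edges of harmonic forms -/

namespace Paper
open Filter Topology

section Tight
variable {V : Type*} {w : V → V → ℝ} {μ : V → ℝ} {d : V → V → ℝ} {α : V → V → ℝ}

/-- The differential of a function is closed. -/
lemma locClosed_exact (H : CombGraph w μ d) (h : V → ℝ) :
    LocClosed w (open Classical in fun x y => if Adj w x y then h y - h x else 0) := by
  classical
  have step : ∀ x y, Lazy w x y → (if Adj w x y then h y - h x else 0) = h y - h x := by
    rintro x y (rfl | hxy)
    · simp
    · rw [if_pos hxy]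
  refine ⟨fun x y => ?_, fun x y hxy => if_neg hxy, fun a b c e f h1 h2 h3 h4 h5 => ?_⟩
  · by_cases hxy : Adj w x y
    · rw [if_pos hxy, if_pos (H.adj_symm hxy)]; ring
    · rw [if_neg hxy, if_neg fun h' => hxy (H.adj_symm h'), neg_zero]
  · rw [step _ _ h1, step _ _ h2, step _ _ h3, step _ _ h4, step _ _ h5]; ring

lemma LocClosed.lin {β : V → V → ℝ} (hα : LocClosed w α) (hβ : LocClosed w β) (s t : ℝ) :
    LocClosed w fun x y => s * α x y + t * β x y := by
  refine ⟨fun x y => ?_, fun x y hxy => ?_, fun a b c e f h1 h2 h3 h4 h5 => ?_⟩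
  · rw [hα.anti x y, hβ.anti x y]; ring
  · rw [hα.supp x y hxy, hβ.supp x y hxy]; ring
  · linear_combination s * hα.pent a b c e f h1 h2 h3 h4 h5 + t * hβ.pent a b c e f h1 h2 h3 h4 h5

/-- The largest set of vertices in which every vertex has an outgoing edge with `α = 1`. -/
def rays (α : V → V → ℝ) : Set V := {v | ∃ S : Set V, v ∈ S ∧ ∀ x ∈ S, ∃ y ∈ S, α x y = 1}

lemma rays_next {x : V} (hx : x ∈ rays α) : ∃ y ∈ rays α, α x y = 1 := by
  obtain ⟨S, hxS, hS⟩ := hx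
  obtain ⟨y, hy, h⟩ := hS x hxS
  exact ⟨y, ⟨S, hy, hS⟩, h⟩

variable [Fintype V]

/-- The Poisson equation `Δh = g - c` is solvable. -/
lemma poisson [Nonempty V] (H : CombGraph w μ d) (g : V → ℝ) :
    ∃ (h : V → ℝ) (c : ℝ), ∀ x, lap w μ h x = g x - c := by
  obtain ⟨o⟩ := ‹Nonempty V›
  let T : (V → ℝ) →ₗ[ℝ] (V → ℝ) :=
    { toFun := fun h x => lap w μ h x - h o
      map_add' := by
        intro h k
        funext x
        simp only [lap, Pi.add_apply]
        rw [show ∑ y, w x y / μ x * (h y + k y - (h x + k x)) =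
          ∑ y, (w x y / μ x * (h y - h x) + w x y / μ x * (k y - k x)) from
            Finset.sum_congr rfl fun y _ => by ring, Finset.sum_add_distrib]
        ring
      map_smul' := by
        intro r h
        funext x
        simp only [lap, Pi.smul_apply, smul_eq_mul, RingHom.id_apply]
        rw [mul_sub, Finset.mul_sum]
        congr 1
        exact Finset.sum_congr rfl fun y _ => by ring }
  have hinj : Function.Injective T := by
    rw [← LinearMap.ker_eq_bot, LinearMap.ker_eq_bot']
    intro h hh
    have hT : ∀ x, lap w μ h x = h o := fun x => by
      have := congrFun hh x
      change lap w μ h x - h o = 0 at this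
      linarith
    obtain ⟨a, -, ha⟩ := Finset.exists_max_image univ h ⟨o, mem_univ o⟩
    obtain ⟨b, -, hb⟩ := Finset.exists_min_image univ h ⟨o, mem_univ o⟩
    have hterm : ∀ x, h x = h a → ∀ y ∈ univ, w x y / μ x * (h y - h x) ≤ 0 := fun x hx y _ =>
      mul_nonpos_of_nonneg_of_nonpos (H.p_nonneg x y) (by linarith [ha y (mem_univ y)])
    have h1 : h o ≤ 0 := by
      rw [← hT a]
      exact Finset.sum_nonpos (hterm a rfl)
    have h2 : 0 ≤ h o := by
      rw [← hT b]
      exact Finset.sum_nonneg fun y _ =>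
        mul_nonneg (H.p_nonneg b y) (by linarith [hb y (mem_univ y)])
    have h0 : h o = 0 := le_antisymm h1 h2
    have hprop : ∀ x y, Adj w x y → h x = h a → h y = h a := by
      intro x y hxy hx
      have hs : ∑ y, w x y / μ x * (h y - h x) = 0 := by rw [← h0]; exact hT x
      have := (Finset.sum_eq_zero_iff_of_nonpos (hterm x hx)).1 hs y (mem_univ y)
      rcases mul_eq_zero.1 this with h' | h'
      · exact absurd h' (H.p_pos hxy).ne'
      · linarith
    have hconst : ∀ x, h x = h a := by
      intro x
      obtain ⟨n, c, hc0, hcn, hc⟩ := H.conn a x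
      have : ∀ i : Fin (n + 1), h (c i) = h a := by
        intro i
        induction i using Fin.induction with
        | zero => rw [hc0]
        | succ i ih => exact hprop _ _ (hc i) ih
      rw [← hcn]
      exact this _
    funext x
    rw [hconst x, ← hconst o, h0]; rfl
  obtain ⟨h, hh⟩ := (LinearMap.injective_iff_surjective.1 hinj) g
  refine ⟨h, -h o, fun x => ?_⟩
  have := congrFun hh x
  change lap w μ h x - h o = g x at this
  linarith

/-- No function `g` decreases strictly along all maximal edges of a harmonic form `α`. Otherwise,
solving `Δh = g - c`, the maximal edges of `α - τ dh` for small `τ > 0` would be among those of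
`α`, and there its divergence `-τ(g - c)` would increase. -/
lemma exists_tight_le [Nonempty V] (H : CombGraph w μ d) (hκ : NonnegCurv w μ d)
    (hα : LocClosed w α) (hle : ∀ u v, α u v ≤ 1)
    (hdiv : ∀ x, ∑ z, w x z / μ x * α x z = 0) {a b : V} (hab : α a b = 1) (g : V → ℝ) :
    ∃ x y, α x y = 1 ∧ g x ≤ g y := by
  classical
  by_contra! hcon
  obtain ⟨h, c, hh⟩ := poisson H g
  set D : V → V → ℝ := fun x y => if Adj w x y then h y - h x else 0 with hD
  have hDc : LocClosed w D := by
    have := locClosed_exact H h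
    convert this
  have e1 : ∀ᶠ τ in 𝓝[>] (0 : ℝ), 0 < α a b - τ * D a b := by
    have t : Tendsto (fun τ : ℝ => α a b - τ * D a b) (𝓝[>] 0) (𝓝 (α a b - 0 * D a b)) :=
      Tendsto.mono_left (Continuous.tendsto (by fun_prop) 0) nhdsWithin_le_nhds
    exact t.eventually_const_lt (by rw [hab]; norm_num)
  have e2 : ∀ᶠ τ in 𝓝[>] (0 : ℝ), ∀ u v, α u v ≠ 1 → α u v - τ * D u v < α a b - τ * D a b := by
    refine eventually_all.2 fun u => eventually_all.2 fun v => ?_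
    by_cases huv : α u v = 1
    · filter_upwards with τ h'
      exact absurd huv h'
    · have t : Tendsto (fun τ : ℝ => (α a b - τ * D a b) - (α u v - τ * D u v)) (𝓝[>] 0)
          (𝓝 ((α a b - 0 * D a b) - (α u v - 0 * D u v))) :=
        Tendsto.mono_left (Continuous.tendsto (by fun_prop) 0) nhdsWithin_le_nhds
      have hlt := lt_of_le_of_ne (hle u v) huv
      filter_upwards [t.eventually_const_lt (u := 0) (by rw [hab]; linarith)] with τ hτ _
      linarith
  obtain ⟨τ, ⟨h1, h2⟩, h0⟩ := ((e1.and e2).and self_mem_nhdsWithin).exists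
  replace h0 : 0 < τ := h0
  obtain ⟨⟨x, y⟩, -, hmax⟩ := Finset.exists_max_image (univ : Finset (V × V))
    (fun q => α q.1 q.2 - τ * D q.1 q.2) ⟨(a, b), mem_univ _⟩
  simp only [mem_univ, forall_const, Prod.forall] at hmax
  have hxy1 : α x y = 1 := by
    by_contra hne
    linarith [h2 x y hne, hmax a b]
  have hxy : Adj w x y := by
    by_contra hne
    rw [hα.supp x y hne] at hxy1
    norm_num at hxy1
  set M := α x y - τ * D x y with hM
  have hMpos : 0 < M := lt_of_lt_of_le h1 (hmax a b)
  have hβ := hα.lin hDc M⁻¹ (-(M⁻¹ * τ))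
  have hval : ∀ u v, M⁻¹ * α u v + -(M⁻¹ * τ) * D u v = M⁻¹ * (α u v - τ * D u v) :=
    fun u v => by ring
  have key := div_le_of_tight H hκ hβ (fun u v => by
      rw [hval]
      calc M⁻¹ * (α u v - τ * D u v) ≤ M⁻¹ * M :=
            mul_le_mul_of_nonneg_left (hmax u v) (inv_pos.2 hMpos).le
        _ = 1 := inv_mul_cancel₀ hMpos.ne') hxy (by rw [hval]; exact inv_mul_cancel₀ hMpos.ne')
  have hs : ∀ u, ∑ z, w u z / μ u * (M⁻¹ * α u z + -(M⁻¹ * τ) * D u z) =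
      -(M⁻¹ * τ) * (g u - c) := by
    intro u
    have hl : ∑ z, w u z / μ u * D u z = g u - c := by
      rw [← hh u]
      refine Finset.sum_congr rfl fun z _ => ?_
      by_cases huz : Adj w u z
      · simp only [hD, if_pos huz]
      · rw [H.p_zero huz, zero_mul, zero_mul]
    calc ∑ z, w u z / μ u * (M⁻¹ * α u z + -(M⁻¹ * τ) * D u z)
        = M⁻¹ * ∑ z, w u z / μ u * α u z + -(M⁻¹ * τ) * ∑ z, w u z / μ u * D u z := by
          rw [Finset.mul_sum, Finset.mul_sum, ← Finset.sum_add_distrib]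
          exact Finset.sum_congr rfl fun z _ => by ring
      _ = -(M⁻¹ * τ) * (g u - c) := by rw [hdiv, hl]; ring
  rw [hs, hs] at key
  have hpos : 0 < M⁻¹ * τ := mul_pos (inv_pos.2 hMpos) h0
  have := hcon x y hxy1
  nlinarith

/-- The maximal edges of a harmonic form contain a directed cycle. -/
lemma rays_nonempty [Nonempty V] (H : CombGraph w μ d) (hκ : NonnegCurv w μ d)
    (hα : LocClosed w α) (hle : ∀ u v, α u v ≤ 1)
    (hdiv : ∀ x, ∑ z, w x z / μ x * α x z = 0) {a b : V} (hab : α a b = 1) :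
    (rays α).Nonempty := by
  classical
  let R : V → V → Prop := fun x y => α x y = 1
  let reach : V → Finset V := fun x => univ.filter fun z => Relation.ReflTransGen R x z
  obtain ⟨x, y, hxy, hg⟩ := exists_tight_le H hκ hα hle hdiv hab fun x => (#(reach x) : ℝ)
  have hsub : reach y ⊆ reach x := by
    intro z hz
    simp only [reach, mem_filter, mem_univ, true_and] at hz ⊢
    exact Relation.ReflTransGen.head hxy hz
  have heq := Finset.eq_of_subset_of_card_le hsub (by exact_mod_cast hg)
  have hyx : Relation.ReflTransGen R y x := by
    have : x ∈ reach y := by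
      rw [heq]
      simp only [reach, mem_filter, mem_univ, true_and]
      exact Relation.ReflTransGen.refl
    simpa [reach] using this
  refine ⟨x, {z | Relation.ReflTransGen R z x}, Relation.ReflTransGen.refl, fun z hz => ?_⟩
  rcases Relation.ReflTransGen.cases_head hz with rfl | ⟨z', h1, h2⟩
  · exact ⟨y, hyx, hxy⟩
  · exact ⟨z', h2, h1⟩

/-- The vertices from which the `1`-neighbourhood of `rays α` is reached along maximal edges. -/
def toRays (w : V → V → ℝ) (α : V → V → ℝ) : Set V :=
  {v | ∃ u, (∃ x ∈ rays α, Lazy w x u) ∧ Relation.ReflTransGen (fun x y => α x y = 1) v u}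

/-- Moving along a maximal edge `(x, y)`, the mass at a neighbour `x'` of `x` is transported to the
neighbourhood of `y` at full slope: either `x'` has an outgoing maximal edge or it stays put. -/
lemma transport_step [Nonempty V] (H : CombGraph w μ d) (hκ : NonnegCurv w μ d)
    (hα : LocClosed w α) (hle : ∀ u v, α u v ≤ 1)
    (hdiv : ∀ x, ∑ z, w x z / μ x * α x z = 0) {x y x' : V} (hx : x ∈ rays α) (hy : y ∈ rays α)
    (hxy1 : α x y = 1) (hx' : Adj w x x') :
    (∃ v ∈ toRays w α, α x' v = 1) ∨ (Adj w y x' ∧ α y x' = α x x' - 1) := by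
  classical
  have hxy : Adj w x y := by
    by_contra hne
    rw [hα.supp x y hne] at hxy1
    norm_num at hxy1
  by_cases hback : α x' x = 1
  · exact Or.inl ⟨x, ⟨x, ⟨x, hx, Or.inl rfl⟩, Relation.ReflTransGen.refl⟩, hback⟩
  by_cases hx'y : x' = y
  · obtain ⟨z, hz, hyz⟩ := rays_next hy
    subst hx'y
    exact Or.inl ⟨z, ⟨z, ⟨z, hz, Or.inl rfl⟩, Relation.ReflTransGen.refl⟩, hyz⟩
  have hgt : -1 < α x x' := by
    refine lt_of_le_of_ne ?_ fun h => hback ?_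
    · linarith [hα.anti x x', hle x' x]
    · rw [hα.anti]; linarith
  have Fx' : pot w α x y x' = α x x' := pot_left (Or.inr hx')
  set U : Set V := {v | pot w α x y v = pot w α x y x' + d x' v} with hU
  have hxU : x ∉ U := by
    intro h
    have h' : pot w α x y x = pot w α x y x' + d x' x := h
    rw [pot_left (Or.inl rfl), hα.self, Fx', H.comb _ _ (H.adj_symm hx')] at h'
    linarith
  obtain ⟨y', hyy', hy'U⟩ : ∃ y', Lazy w y y' ∧ y' ∈ U := by
    by_cases hyU : y ∈ U
    · exact ⟨y, Or.inl rfl, hyU⟩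
    have key := transport H hκ hα hle hdiv hxy hxy1 hx' U (fun v => Iff.rfl) hxU hyU
    have hx'U : x' ∈ U := by
      change pot w α x y x' = pot w α x y x' + d x' x'
      rw [H.d_self, add_zero]
    have hind : ∀ z, (0 : ℝ) ≤ U.indicator 1 z := fun z =>
      Set.indicator_nonneg (fun _ _ => zero_le_one) z
    have hpos : 0 < ∑ z, w x z / μ x * U.indicator 1 z := by
      refine lt_of_lt_of_le (H.p_pos hx') ?_
      have := Finset.single_le_sum (f := fun z => w x z / μ x * U.indicator 1 z)
        (fun z _ => mul_nonneg (H.p_nonneg x z) (hind z)) (mem_univ x')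
      simpa [Set.indicator_of_mem hx'U] using this
    obtain ⟨z, -, hz⟩ := Finset.exists_ne_zero_of_sum_ne_zero (hpos.trans_le key).ne'
    refine ⟨z, Or.inr ?_, ?_⟩
    · by_contra hne
      rw [H.p_zero hne, zero_mul] at hz
      exact hz rfl
    · by_contra hne
      rw [Set.indicator_of_notMem hne, mul_zero] at hz
      exact hz rfl
  have hslope : pot w α x y y' = pot w α x y x' + d x' y' := hy'U
  rcases H.d_cases x' y' with ⟨h, -⟩ | ⟨h, e⟩ | ⟨z, h1, h2, e⟩ | e
  · right
    subst h
    refine ⟨hyy'.resolve_left fun h => hx'y h.symm, ?_⟩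
    have := pot_right H hα hxy hyy'
    rw [Fx', hxy1] at this
    linarith
  · left
    have := pot_step H hα hxy (Or.inl (Or.inr hx')) (Or.inr hyy') (Or.inl rfl) (Or.inr h)
    rw [hα.self, zero_add] at this
    exact ⟨y', ⟨y', ⟨y, hy, hyy'⟩, Relation.ReflTransGen.refl⟩, by linarith⟩
  · left
    have := pot_step H hα hxy (Or.inl (Or.inr hx')) (Or.inr hyy') (Or.inr h1) (Or.inr h2)
    have a1 := hle x' z
    have a2 := hle z y'
    exact ⟨z, ⟨y', ⟨y, hy, hyy'⟩, Relation.ReflTransGen.single (by linarith)⟩, by linarith⟩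
  · have := pot_right H hα hxy hyy'
    linarith [hle y y']

/-- Every neighbour of `rays α` has an outgoing maximal edge: following a ray, it cannot be
transported trivially forever, since `α(x, x')` drops by one at each step. -/
lemma rays_neighbor [Nonempty V] (H : CombGraph w μ d) (hκ : NonnegCurv w μ d)
    (hα : LocClosed w α) (hle : ∀ u v, α u v ≤ 1)
    (hdiv : ∀ x, ∑ z, w x z / μ x * α x z = 0) (n : ℕ) :
    ∀ {x x' : V}, x ∈ rays α → Adj w x x' → α x x' < n - 1 → ∃ v ∈ toRays w α, α x' v = 1 := by
  induction n with
  | zero =>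
    intro x x' _ _ h
    push_cast at h
    linarith [hα.anti x x', hle x' x]
  | succ n ih =>
    intro x x' hx hx' h
    obtain ⟨y, hy, hxy⟩ := rays_next hx
    rcases transport_step H hκ hα hle hdiv hx hy hxy hx' with h' | ⟨h1, h2⟩
    · exact h'
    · refine ih hy h1 ?_
      push_cast at h
      linarith

/-- Every vertex starts an infinite walk along maximal edges: `rays α` is nonempty and, by
`rays_neighbor`, closed under taking neighbours. -/
lemma rays_univ [Nonempty V] (H : CombGraph w μ d) (hκ : NonnegCurv w μ d)
    (hα : LocClosed w α) (hle : ∀ u v, α u v ≤ 1)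
    (hdiv : ∀ x, ∑ z, w x z / μ x * α x z = 0) {a b : V} (hab : α a b = 1) (x : V) :
    x ∈ rays α := by
  have hnext : ∀ v ∈ toRays w α, ∃ v' ∈ toRays w α, α v v' = 1 := by
    rintro v ⟨u, ⟨z, hz, hzu⟩, hvu⟩
    rcases Relation.ReflTransGen.cases_head hvu with rfl | ⟨v', h1, h2⟩
    · rcases hzu with rfl | hzu
      · obtain ⟨y, hy, hzy⟩ := rays_next hz
        exact ⟨y, ⟨y, ⟨y, hy, Or.inl rfl⟩, Relation.ReflTransGen.refl⟩, hzy⟩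
      · exact rays_neighbor H hκ hα hle hdiv 3 hz hzu (by push_cast; linarith [hle z v])
    · exact ⟨v', ⟨u, ⟨z, hz, hzu⟩, h2⟩, h1⟩
  have hnb : ∀ z u, z ∈ rays α → Adj w z u → u ∈ rays α := fun z u hz hzu =>
    ⟨toRays w α, ⟨u, ⟨z, hz, Or.inr hzu⟩, Relation.ReflTransGen.refl⟩, hnext⟩
  obtain ⟨o, ho⟩ := rays_nonempty H hκ hα hle hdiv hab
  obtain ⟨n, c, hc0, hcn, hc⟩ := H.conn o x
  have : ∀ i : Fin (n + 1), c i ∈ rays α := by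
    intro i
    induction i using Fin.induction with
    | zero => rwa [hc0]
    | succ i ih => exact hnb _ _ ih (hc i)
  rw [← hcn]
  exact this _

lemma H1_smul {r : ℝ} (hα : α ∈ H1set w μ d) : (fun x y => r * α x y) ∈ H1set w μ d := by
  obtain ⟨h1, h2, h3, h4⟩ := hα
  refine ⟨fun x y => ?_, fun x y h => ?_, fun n c hc hX => ?_, fun x => ?_⟩
  · show r * α x y = -(r * α y x)
    rw [h1 x y]; ring
  · show r * α x y = 0
    rw [h2 x y h, mul_zero]
  · rw [← Finset.mul_sum, h3 n c hc hX, mul_zero]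
  · rw [Finset.sum_congr rfl fun y _ => show w x y / μ x * (r * α x y) =
      r * (w x y / μ x * α x y) by ring, ← Finset.mul_sum, h4, mul_zero]

/-- A nonzero harmonic form attains its maximum norm on an outgoing edge at every vertex. -/
lemma max_everywhere [Nonempty V] (H : CombGraph w μ d) (hκ : NonnegCurv w μ d)
    (hα : α ∈ H1set w μ d) (hne : α ≠ 0) (x : V) :
    ∃ y, 0 < α x y ∧ ∀ u v, |α u v| ≤ α x y := by
  classical
  obtain ⟨o⟩ := ‹Nonempty V›
  obtain ⟨⟨a, b⟩, -, hmax⟩ := Finset.exists_max_image (univ : Finset (V × V))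
    (fun q => α q.1 q.2) ⟨(o, o), mem_univ _⟩
  simp only [mem_univ, forall_const, Prod.forall] at hmax
  have hanti := hα.1
  have habs : ∀ u v, |α u v| ≤ α a b := fun u v =>
    abs_le.2 ⟨by linarith [hanti u v, hmax v u], hmax u v⟩
  have hpos : 0 < α a b := by
    by_contra hle
    refine hne (funext fun u => funext fun v => ?_)
    have := (habs u v).trans (not_lt.1 hle)
    exact abs_nonpos_iff.1 this
  set M := α a b
  have hβ := H1_smul (r := M⁻¹) hα
  have : Nonempty V := ⟨o⟩
  have hx := rays_univ H hκ (H1_locClosed H hβ) (fun u v => by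
    calc M⁻¹ * α u v ≤ M⁻¹ * M := mul_le_mul_of_nonneg_left (hmax u v) (inv_pos.2 hpos).le
      _ = 1 := inv_mul_cancel₀ hpos.ne') hβ.2.2.2 (a := a) (b := b)
      (inv_mul_cancel₀ hpos.ne') x
  obtain ⟨y, -, hy⟩ := rays_next hx
  have : α x y = M := by
    field_simp at hy
    exact hy
  exact ⟨y, this ▸ hpos, fun u v => this ▸ habs u v⟩

end Tight
end Paper

/-! ### Frames of harmonic forms -/

namespace Paper
open Filter Topology

section Harmonic
variable {V : Type*} {m : ℕ}

lemma units_cast_mul_self (s : ℤˣ) : ((s : ℤ) : ℝ) * ((s : ℤ) : ℝ) = 1 := by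
  rcases Int.units_eq_one_or s with rfl | rfl <;> norm_num

lemma units_cast_abs (s : ℤˣ) : |((s : ℤ) : ℝ)| = 1 := by
  rcases Int.units_eq_one_or s with rfl | rfl <;> norm_num

/-- `y` is reached from `x` by the step in direction `s • e_i`, measured by the frame. -/
def IsStep (β : Fin m → V → V → ℝ) (i : Fin m) (s : ℤˣ) (x y : V) : Prop :=
  ∀ k, β k x y = if k = i then ((s : ℤ) : ℝ) else 0

lemma step_inj {β : Fin m → V → V → ℝ} {i j : Fin m} {s t : ℤˣ} {x y : V} (h : IsStep β i s x y)
    (h' : IsStep β j t x y) : i = j ∧ s = t := by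
  have h1 := h i
  rw [if_pos rfl, h' i] at h1
  split_ifs at h1 with hij
  · exact ⟨hij, Units.ext (by exact_mod_cast h1.symm)⟩
  · have := units_cast_mul_self s
    rw [← h1] at this
    norm_num at this

variable [Fintype V] {w : V → V → ℝ} {μ : V → ℝ} {d : V → V → ℝ}

/-- The harmonic forms as a linear subspace. -/
def H1sub (w : V → V → ℝ) (μ : V → ℝ) (d : V → V → ℝ) : Submodule ℝ (V → V → ℝ) where
  carrier := H1set w μ d
  add_mem' := by
    rintro α β ⟨a1, a2, a3, a4⟩ ⟨b1, b2, b3, b4⟩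
    refine ⟨fun x y => ?_, fun x y h => ?_, fun n c hc hX => ?_, fun x => ?_⟩
    · simp only [Pi.add_apply]
      rw [a1 x y, b1 x y]; ring
    · simp only [Pi.add_apply]
      rw [a2 x y h, b2 x y h, add_zero]
    · simp only [Pi.add_apply]
      rw [Finset.sum_add_distrib, a3 n c hc hX, b3 n c hc hX, add_zero]
    · simp only [Pi.add_apply, mul_add]
      rw [Finset.sum_add_distrib, a4, b4, add_zero]
  zero_mem' := by
    refine ⟨fun x y => ?_, fun x y h => ?_, fun n c hc hX => ?_, fun x => ?_⟩ <;> simp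
  smul_mem' r _ hα := H1_smul (r := r) hα

lemma betti1_eq : betti1 w μ d = Module.finrank ℝ (H1sub w μ d) := by
  unfold betti1
  rw [show Submodule.span ℝ (H1set w μ d) = H1sub w μ d from Submodule.span_eq (H1sub w μ d)]

/-- Evaluation of a harmonic form on an ordered pair. -/
def ev (w : V → V → ℝ) (μ : V → ℝ) (d : V → V → ℝ) (x y : V) : H1sub w μ d →ₗ[ℝ] ℝ :=
  (LinearMap.proj y ∘ₗ LinearMap.proj x) ∘ₗ (H1sub w μ d).subtype

lemma ev_apply (x y : V) (α : H1sub w μ d) : ev w μ d x y α = (α : V → V → ℝ) x y := rfl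

lemma ev_max [Nonempty V] (H : CombGraph w μ d) (hκ : NonnegCurv w μ d) (x : V)
    (α : H1sub w μ d) (hne : α ≠ 0) :
    ∃ s : {y // Adj w x y}, 0 < ev w μ d x s α ∧
      ∀ u : {y // Adj w x y}, |ev w μ d x u α| ≤ ev w μ d x s α := by
  obtain ⟨y, hy, hmax⟩ := max_everywhere H hκ α.2 (fun h => hne (Subtype.ext h)) x
  have hadj : Adj w x y := by
    by_contra h
    rw [α.2.2.1 x y h] at hy
    exact lt_irrefl _ hy
  exact ⟨⟨y, hadj⟩, hy, fun u => hmax _ _⟩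

/-- The Betti bound: `2 β₁` is at most the degree of every vertex. -/
lemma two_betti_le [Nonempty V] (H : CombGraph w μ d) (hκ : NonnegCurv w μ d) (x : V) :
    2 * betti1 w μ d ≤ deg w x := by
  classical
  rw [betti1_eq, deg, Nat.card_eq_fintype_card]
  exact (paired_functionals (fun y : {y // Adj w x y} => ev w μ d x y)
    (ev_max H hκ x)).1

/-- A basis of harmonic forms adapted to the edges: in the sharp case these forms take the values
`±1` on exactly two edges at each vertex, and vanish on the others. -/
structure Frame (w : V → V → ℝ) (μ : V → ℝ) (d : V → V → ℝ) (β : Fin m → V → V → ℝ) :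
    Prop where
  mem : ∀ i, β i ∈ H1set w μ d
  bound : ∀ x y, ∑ i, |β i x y| ≤ 1
  hit : ∀ i x (s : ℤˣ), ∃ y, β i x y = (s : ℤ)
  deg_le : ∀ x, deg w x ≤ 2 * m

lemma deg_le_degMax (x : V) : deg w x ≤ degMax w :=
  le_ciSup (Set.finite_range (deg w)).bddAbove x

/-- In the sharp case there is a frame: at a base vertex the evaluations are `±` the coordinates of
a basis of the harmonic forms, and the maxima at all other vertices are the same. -/
lemma exists_frame [Nonempty V] (H : CombGraph w μ d) (hκ : NonnegCurv w μ d)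
    (hm : betti1 w μ d = m) (hdeg : 2 * m = degMax w) :
    ∃ β : Fin m → V → V → ℝ, Frame w μ d β := by
  classical
  obtain ⟨o⟩ := ‹Nonempty V›
  have : Nonempty V := ⟨o⟩
  have hd : ∀ x, deg w x ≤ 2 * m := fun x => hdeg ▸ deg_le_degMax x
  obtain ⟨b, hb⟩ := (paired_functionals (fun y : {y // Adj w o y} => ev w μ d o y)
    (ev_max H hκ o)).2 m (by rw [← betti1_eq, hm])
      (by rw [← Nat.card_eq_fintype_card]; exact hd o)
  -- every form attains its maximum at the base point, where evaluations are coordinates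
  have key : ∀ α : H1sub w μ d, α ≠ 0 → ∃ k, |b.coord k α| ≠ 0 ∧
      (∀ u v, |(α : V → V → ℝ) u v| ≤ |b.coord k α|) ∧
      ∀ x, ∃ y, (α : V → V → ℝ) x y = |b.coord k α| := by
    intro α hne
    have hne' : (α : V → V → ℝ) ≠ 0 := fun h => hne (Subtype.ext h)
    obtain ⟨y, hy, hmax⟩ := max_everywhere H hκ α.2 hne' o
    have hadj : Adj w o y := by
      by_contra h
      rw [α.2.2.1 o y h] at hy
      exact lt_irrefl _ hy
    obtain ⟨k, hk⟩ := hb ⟨y, hadj⟩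
    have hval : |b.coord k α| = (α : V → V → ℝ) o y := by
      have h1 : ev w μ d o y α = (α : V → V → ℝ) o y := rfl
      rcases hk with hk | hk
      · rw [← hk, h1, abs_of_pos hy]
      · have : b.coord k α = -(α : V → V → ℝ) o y := by
          rw [← h1]
          simp only at hk
          rw [hk, LinearMap.neg_apply, neg_neg]
        rw [this, abs_neg, abs_of_pos hy]
    refine ⟨k, hval ▸ hy.ne', hval ▸ hmax, fun x => ?_⟩
    obtain ⟨z, hz, hzmax⟩ := max_everywhere H hκ α.2 hne' x
    refine ⟨z, ?_⟩
    rw [hval]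
    exact le_antisymm ((le_abs_self _).trans (hmax x z)) ((le_abs_self _).trans (hzmax o y))
  refine ⟨fun i => (b i : V → V → ℝ), fun i => (b i).2, fun x y => ?_, fun i x s => ?_, hd⟩
  · let s : Fin m → ℝ := fun i => SignType.sign ((b i : V → V → ℝ) x y)
    let α : H1sub w μ d := ∑ i, s i • b i
    have hα : ∑ i, |(b i : V → V → ℝ) x y| = (α : V → V → ℝ) x y := by
      simp only [α, AddSubmonoidClass.coe_finsetSum, Finset.sum_apply, s]
      refine Finset.sum_congr rfl fun i _ => ?_
      simp [sign_mul_self]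
    rw [hα]
    by_cases h0 : α = 0
    · rw [h0]; simp
    · obtain ⟨k, -, hk, -⟩ := key α h0
      refine (le_abs_self _).trans ((hk x y).trans ?_)
      have : b.coord k α = s k := by
        rw [Module.Basis.coord_apply, Module.Basis.repr_sum_self]
      rw [this]
      simp only [s]
      rcases lt_trichotomy ((b k : V → V → ℝ) x y) 0 with h | h | h <;> simp [h]
  · have hs := units_cast_mul_self s
    have hne : ((s : ℤ) : ℝ) • b i ≠ 0 := by
      intro h
      rcases smul_eq_zero.1 h with h | h
      · rw [h] at hs; norm_num at hs
      · exact b.ne_zero i h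
    obtain ⟨k, hk0, -, hk⟩ := key _ hne
    obtain ⟨y, hy⟩ := hk x
    refine ⟨y, ?_⟩
    have hc : b.coord k (((s : ℤ) : ℝ) • b i) = if i = k then ((s : ℤ) : ℝ) else 0 := by
      rw [map_smul, Module.Basis.coord_apply, Module.Basis.repr_self, Finsupp.single_apply]
      split_ifs <;> simp
    rw [hc] at hk0 hy
    split_ifs at hk0 hy with hik
    · rw [units_cast_abs] at hy
      have : ((s : ℤ) : ℝ) * (b i : V → V → ℝ) x y = 1 := hy
      calc (b i : V → V → ℝ) x y = (s : ℤ) * ((s : ℤ) * (b i : V → V → ℝ) x y) := by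
            rw [← mul_assoc, hs, one_mul]
        _ = (s : ℤ) := by rw [this, mul_one]
    · simp at hk0

namespace Frame
variable {β : Fin m → V → V → ℝ}

lemma adj (F : Frame w μ d β) {i : Fin m} {s : ℤˣ} {x y : V} (h : IsStep β i s x y) :
    Adj w x y := by
  by_contra hn
  have h1 := h i
  rw [(F.mem i).2.1 x y hn, if_pos rfl] at h1
  have := units_cast_mul_self s
  rw [← h1] at this
  norm_num at this

lemma exists_step (F : Frame w μ d β) (i : Fin m) (s : ℤˣ) (x : V) : ∃ y, IsStep β i s x y := by
  obtain ⟨y, hy⟩ := F.hit i x s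
  refine ⟨y, fun k => ?_⟩
  split_ifs with hk
  · rw [hk, hy]
  · have h1 := F.bound x y
    have h2 : |β i x y| + |β k x y| ≤ ∑ j, |β j x y| := by
      rw [← Finset.sum_pair (f := fun j => |β j x y|) (Ne.symm hk)]
      exact Finset.sum_le_sum_of_subset_of_nonneg (Finset.subset_univ _)
        fun _ _ _ => abs_nonneg _
    rw [hy, units_cast_abs] at h2
    exact abs_nonpos_iff.1 (by linarith)

lemma step_anti (F : Frame w μ d β) {i : Fin m} {s : ℤˣ} {x y : V} (h : IsStep β i s x y) :
    IsStep β i (-s) y x := by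
  intro k
  rw [(F.mem k).1 y x, h k]
  split_ifs <;> simp

/-- The endpoint of the step in direction `s • e_i` starting at `x`. -/
noncomputable def nb (F : Frame w μ d β) (x : V) (i : Fin m) (s : ℤˣ) : V :=
  (F.exists_step i s x).choose

lemma nb_step (F : Frame w μ d β) (x : V) (i : Fin m) (s : ℤˣ) : IsStep β i s x (F.nb x i s) :=
  (F.exists_step i s x).choose_spec

/-- The `2m` steps at `x` exhaust the neighbours of `x`, as `x` has degree at most `2m`. -/
lemma exists_eq_nb (F : Frame w μ d β) {x y : V} (h : Adj w x y) : ∃ i s, y = F.nb x i s := by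
  classical
  have hbij := Function.Injective.bijective_of_nat_card_le
    (f := fun q : Fin m × ℤˣ => (⟨F.nb x q.1 q.2, F.adj (F.nb_step x q.1 q.2)⟩ : {y // Adj w x y}))
    (fun q r hqr => by
      have h1 : F.nb x q.1 q.2 = F.nb x r.1 r.2 := congrArg Subtype.val hqr
      have := step_inj (F.nb_step x q.1 q.2) (h1 ▸ F.nb_step x r.1 r.2)
      exact Prod.ext this.1 this.2)
    ((F.deg_le x).trans (by simp [mul_comm]))
  obtain ⟨q, hq⟩ := hbij.2 ⟨y, h⟩
  exact ⟨q.1, q.2, (congrArg Subtype.val hq).symm⟩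

lemma eq_nb (F : Frame w μ d β) {i : Fin m} {s : ℤˣ} {x y : V} (h : IsStep β i s x y) :
    y = F.nb x i s := by
  obtain ⟨j, t, hj⟩ := F.exists_eq_nb (F.adj h)
  obtain ⟨rfl, rfl⟩ := step_inj h (hj ▸ F.nb_step x j t)
  exact hj

lemma nb_nb (F : Frame w μ d β) (x : V) (i : Fin m) (s : ℤˣ) :
    F.nb (F.nb x i s) i (-s) = x :=
  (F.eq_nb (F.step_anti (F.nb_step x i s))).symm

/-- Harmonicity of the `i`-th form makes the two steps in direction `i` equally likely. -/
lemma w_symm (F : Frame w μ d β) (H : CombGraph w μ d) (x : V) (i : Fin m) :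
    w x (F.nb x i 1) = w x (F.nb x i (-1)) := by
  classical
  have h := (F.mem i).2.2.2 x
  have hne : F.nb x i 1 ≠ F.nb x i (-1) := by
    intro h
    have := (step_inj (F.nb_step x i 1) (h ▸ F.nb_step x i (-1))).2
    exact absurd this (by decide)
  rw [← Finset.sum_subset (Finset.subset_univ {F.nb x i 1, F.nb x i (-1)}),
    Finset.sum_pair hne, F.nb_step x i 1 i, F.nb_step x i (-1) i] at h
  · have := H.graph.mu_pos x
    simp at h
    field_simp at h
    linarith
  · intro y _ hy
    by_cases hxy : Adj w x y
    · obtain ⟨j, s, rfl⟩ := F.exists_eq_nb hxy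
      rw [F.nb_step x j s i]
      split_ifs with hij
      · subst hij
        rcases Int.units_eq_one_or s with rfl | rfl <;> simp at hy
      · rw [mul_zero]
    · rw [H.p_zero hxy, zero_mul]

/-- Steps in different directions commute, and the transition probability in direction `i` does
not decrease along a step in direction `j`. This is mass transport along the edge `x ∼ y` for the
form `t β_j + (s/3) β_i`: the weight `1/3` makes its values distinguish all directions modulo
`ℤ`, while distances are integers. -/
lemma square [Nonempty V] (F : Frame w μ d β) (H : CombGraph w μ d) (hκ : NonnegCurv w μ d)
    {i j : Fin m} (hij : i ≠ j) (s t : ℤˣ) (x : V) :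
    F.nb (F.nb x j t) i s = F.nb (F.nb x i s) j t ∧
      w x (F.nb x i s) / μ x ≤ w (F.nb x j t) (F.nb (F.nb x j t) i s) / μ (F.nb x j t) := by
  classical
  set y := F.nb x j t with hy
  set x' := F.nb x i s with hx'
  set y' := F.nb y i s with hy'
  have sxy : IsStep β j t x y := F.nb_step x j t
  have sxx : IsStep β i s x x' := F.nb_step x i s
  have syy : IsStep β i s y y' := F.nb_step y i s
  let α : V → V → ℝ := fun u v => (t : ℤ) * β j u v + (s : ℤ) / 3 * β i u v
  have hαmem : α ∈ H1set w μ d :=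
    (H1sub w μ d).add_mem (H1_smul (r := (t : ℤ)) (F.mem j)) (H1_smul (r := (s : ℤ) / 3) (F.mem i))
  have hα := H1_locClosed H hαmem
  have ht2 := units_cast_mul_self t
  have hs2 := units_cast_mul_self s
  -- the values of `α` on steps
  have val : ∀ {u v : V} {k : Fin m} {r : ℤˣ}, IsStep β k r u v →
      α u v = (if j = k then ((t : ℤ) : ℝ) * (r : ℤ) else 0) +
        if i = k then ((s : ℤ) : ℝ) * (r : ℤ) / 3 else 0 := by
    intro u v k r h
    simp only [α]
    rw [h j, h i]
    split_ifs <;> ring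
  have hle : ∀ u v, α u v ≤ 1 := by
    intro u v
    by_cases huv : Adj w u v
    · obtain ⟨k, r, rfl⟩ := F.exists_eq_nb huv
      rw [val (F.nb_step u k r)]
      rcases Int.units_eq_one_or s with rfl | rfl <;>
      rcases Int.units_eq_one_or t with rfl | rfl <;>
      rcases Int.units_eq_one_or r with rfl | rfl <;>
      split_ifs with h1 h2 h2 <;> first | exact absurd (h2.trans h1.symm) hij | norm_num
    · rw [hα.supp u v huv]; norm_num
  have hαxy : α x y = 1 := by
    rw [val sxy, if_pos rfl, if_neg hij, ht2, add_zero]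
  have hαxx : α x x' = 1 / 3 := by
    rw [val sxx, if_pos rfl, if_neg hij.symm, hs2, zero_add]
  have hxy := F.adj sxy
  have hxx := F.adj sxx
  have px' : pot w α x y x' = 1 / 3 := by rw [pot_left (Or.inr hxx), hαxx]
  let U : Set V := {v | pot w α x y v = pot w α x y x' + d x' v}
  have hxU : x ∉ U := by
    intro h
    have h : pot w α x y x = pot w α x y x' + d x' x := h
    rw [px', pot_left (Or.inl rfl), hα.self] at h
    linarith [H.dist.2.2.1 x' x]
  have hyU : y ∉ U := by
    intro h
    have h : pot w α x y y = pot w α x y x' + d x' y := h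
    rw [px', pot_right H hα hxy (Or.inl rfl), hα.self, hαxy, H.d_eq] at h
    have h : (3 : ℝ) * ((toSimple w).dist x' y : ℕ) = 2 := by linarith
    have h : 3 * (toSimple w).dist x' y = 2 := by exact_mod_cast h
    omega
  have hx'U : x' ∈ U := by
    show pot w α x y x' = pot w α x y x' + d x' x'
    rw [H.d_self, add_zero]
  have hz : ∀ z, Adj w y z → z ∈ U → z = y' ∧ d x' z = 1 := by
    intro z hyz hzU
    have h : pot w α x y z = pot w α x y x' + d x' z := hzU
    rw [px', pot_right H hα hxy (Or.inr hyz), hαxy] at h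
    obtain ⟨k, r, rfl⟩ := F.exists_eq_nb hyz
    rw [val (F.nb_step y k r), H.d_eq] at h
    rw [H.d_eq]
    generalize hD : (toSimple w).dist x' (F.nb y k r) = D at h
    have hr : ((r : ℤ) : ℝ) = 1 ∨ ((r : ℤ) : ℝ) = -1 := by
      rcases Int.units_eq_one_or r with rfl | rfl <;> simp
    by_cases hjk : j = k
    · exfalso
      rw [if_pos hjk, if_neg fun hik => hij (hik.trans hjk.symm)] at h
      have h : (3 : ℤ) * D = 2 + 3 * ((t : ℤ) * r) := by
        have : (3 : ℝ) * D = 2 + 3 * (((t : ℤ) : ℝ) * (r : ℤ)) := by linarith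
        exact_mod_cast this
      omega
    · rw [if_neg hjk] at h
      by_cases hik : i = k
      · rw [if_pos hik] at h
        have h : (3 : ℤ) * D = 2 + ((s : ℤ) * r) := by
          have : (3 : ℝ) * D = 2 + (((s : ℤ) : ℝ) * (r : ℤ)) := by linarith
          exact_mod_cast this
        subst hik
        rcases Int.units_eq_one_or s with rfl | rfl <;>
        rcases Int.units_eq_one_or r with rfl | rfl <;>
        simp at h <;> first | omega | exact ⟨rfl, by
          have : D = 1 := by omega
          exact_mod_cast this⟩
      · exfalso
        rw [if_neg hik] at h
        have h : (3 : ℤ) * D = 2 := by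
          have : (3 : ℝ) * D = 2 := by linarith
          exact_mod_cast this
        omega
  have htr := transport H hκ hα hle hαmem.2.2.2 hxy hαxy hxx U (fun v => Iff.rfl) hxU hyU
  have hleft : w x x' / μ x ≤ ∑ z, w x z / μ x * U.indicator 1 z := by
    refine le_trans (le_of_eq ?_) (Finset.single_le_sum (fun z _ => mul_nonneg (H.p_nonneg x z)
      (Set.indicator_nonneg (fun _ _ => zero_le_one) z)) (Finset.mem_univ x'))
    rw [Set.indicator_of_mem hx'U, mul_one]
  have hright : ∑ z, w y z / μ y * U.indicator 1 z = w y y' / μ y * U.indicator 1 y' := by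
    refine Finset.sum_eq_single _ (fun z _ hzy => ?_) (fun h => absurd (Finset.mem_univ _) h)
    by_cases hyz : Adj w y z
    · rw [Set.indicator_of_notMem fun hzU => hzy (hz z hyz hzU).1, mul_zero]
    · rw [H.p_zero hyz, zero_mul]
  rw [hright] at htr
  have hpos := H.p_pos hxx
  have hy'U : y' ∈ U := by
    by_contra h
    rw [Set.indicator_of_notMem h, mul_zero] at htr
    linarith
  rw [Set.indicator_of_mem hy'U, Pi.one_apply, mul_one] at htr
  refine ⟨?_, hleft.trans htr⟩
  have hd1 := (hz y' (F.adj syy) hy'U).2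
  have hadj : Adj w x' y' := by
    rcases H.d_cases x' y' with ⟨-, h⟩ | ⟨h, -⟩ | ⟨_, _, _, h⟩ | h
    · rw [h] at hd1; norm_num at hd1
    · exact h
    · rw [h] at hd1; norm_num at hd1
    · rw [hd1] at h; norm_num at h
  refine F.eq_nb fun k => ?_
  have hk := H1_locClosed H (F.mem k)
  have := hk.quad (Or.inr hxx) (Or.inr hadj) (Or.inr (H.adj_symm (F.adj syy)))
    (Or.inr (H.adj_symm hxy))
  rw [hk.anti y' y, hk.anti y x, sxx k, syy k, sxy k] at this
  linarith

/-- Translation invariance of the transition probabilities: the inequality of `square`, applied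
along the edge in both directions. -/
lemma p_eq [Nonempty V] (F : Frame w μ d β) (H : CombGraph w μ d) (hκ : NonnegCurv w μ d)
    {i j : Fin m} (hij : i ≠ j) (s t : ℤˣ) (x : V) :
    w x (F.nb x i s) / μ x = w (F.nb x j t) (F.nb (F.nb x j t) i s) / μ (F.nb x j t) := by
  refine le_antisymm (F.square H hκ hij s t x).2 ?_
  have := (F.square H hκ hij s (-t) (F.nb x j t)).2
  rwa [F.nb_nb] at this

/-- The step in direction `e_i` as a permutation of the vertices. -/
noncomputable def shift (F : Frame w μ d β) (i : Fin m) : Equiv.Perm V where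
  toFun x := F.nb x i 1
  invFun x := F.nb x i (-1)
  left_inv x := F.nb_nb x i 1
  right_inv x := by simpa using F.nb_nb x i (-1)

end Frame
end Harmonic
end Paper

/-! ### The group structure in the sharp case -/

namespace Paper
open Filter Topology

section Torus
variable {V : Type*}

/-- A transitive family of commuting permutations turns the underlying set into an abelian group
on which the permutations act as translations by generators: the group they generate acts
freely and transitively. -/
lemma exists_commGroup {ι : Type*} (σ : ι → Equiv.Perm V)
    (hcomm : ∀ i j, σ i * σ j = σ j * σ i) (o : V)
    (htrans : ∀ y, ∃ g ∈ Subgroup.closure (Set.range σ), g o = y) :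
    ∃ (_ : CommGroup V) (a : ι → V), Subgroup.closure (Set.range a) = ⊤ ∧
      ∀ i x, a i * x = σ i x := by
  let G := Subgroup.closure (Set.range σ)
  have hG : IsMulCommutative G := Subgroup.isMulCommutative_closure (by
    rintro _ ⟨i, rfl⟩ _ ⟨j, rfl⟩
    exact hcomm i j)
  let instG : CommGroup G := { Subgroup.toGroup G with mul_comm := hG.is_comm.comm }
  let φ : G → V := fun g => g.1 o
  have hφ : Function.Bijective φ := by
    refine ⟨fun g h hgh => Subtype.ext (Equiv.ext fun y => ?_), fun y => ?_⟩
    · obtain ⟨k, hk, rfl⟩ := htrans y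
      have h1 : g.1 * k = k * g.1 := congrArg Subtype.val (mul_comm g ⟨k, hk⟩)
      have h2 : h.1 * k = k * h.1 := congrArg Subtype.val (mul_comm h ⟨k, hk⟩)
      rw [← Equiv.Perm.mul_apply, ← Equiv.Perm.mul_apply, h1, h2]
      exact congrArg k hgh
    · obtain ⟨g, hg, hy⟩ := htrans y
      exact ⟨⟨g, hg⟩, hy⟩
  let e : V ≃ G := (Equiv.ofBijective φ hφ).symm
  let instV : CommGroup V := e.commGroup
  have he : ∀ g : G, e (φ g) = g := fun g => (Equiv.ofBijective φ hφ).symm_apply_apply g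
  have he' : ∀ x, φ (e x) = x := fun x => (Equiv.ofBijective φ hφ).apply_symm_apply x
  have hmul : ∀ x y : V, x * y = φ (e x * e y) := fun x y => rfl
  let ψ : G →* V :=
    { toFun := φ
      map_one' := rfl
      map_mul' := fun g h => by rw [hmul, he, he] }
  let τ : ι → G := fun i => ⟨σ i, Subgroup.subset_closure ⟨i, rfl⟩⟩
  refine ⟨instV, fun i => φ (τ i), ?_, fun i x => ?_⟩
  · have h1 : Set.range (fun i => φ (τ i)) = ψ '' Set.range τ := by
      rw [← Set.range_comp]; rfl
    have h2 : Subgroup.closure (Set.range τ) = ⊤ := by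
      have : Set.range τ = ((↑) : G → Equiv.Perm V) ⁻¹' Set.range σ := by
        ext g
        constructor
        · rintro ⟨i, rfl⟩
          exact ⟨i, rfl⟩
        · rintro ⟨i, hi⟩
          exact ⟨i, Subtype.ext hi⟩
      rw [this]
      exact Subgroup.closure_closure_coe_preimage
    rw [h1, ← MonoidHom.map_closure, h2, ← MonoidHom.range_eq_map,
      MonoidHom.range_eq_top]
    exact hφ.2
  · rw [hmul, he]
    show σ i (φ (e x)) = σ i x
    rw [he']

variable [Fintype V] {w : V → V → ℝ} {μ : V → ℝ} {d : V → V → ℝ} {m : ℕ}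

/-- In an abelian group generated by steps, translation by `∏ a_i ^ v_i` is realized by a lazy walk
with `n ≥ ‖v‖₁` steps along which the frame forms integrate to `v`. -/
lemma Frame.exists_walk {β : Fin m → V → V → ℝ} (F : Frame w μ d β) (H : CombGraph w μ d)
    [CommGroup V] {a : Fin m → V}
    (ha : ∀ i x, IsStep β i 1 x (a i * x)) (n : ℕ) :
    ∀ v : Fin m → ℤ, ∑ i, |v i| ≤ n → ∀ x : V, ∃ c : ℕ → V, c 0 = x ∧
      c n = (∏ i, a i ^ v i) * x ∧ (∀ k, Lazy w (c k) (c (k + 1))) ∧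
      ∀ i, ∑ k ∈ Finset.range n, β i (c k) (c (k + 1)) = v i := by
  induction n with
  | zero =>
    intro v hv x
    have hv0 : ∀ i, v i = 0 := fun i => by
      have := Finset.single_le_sum (f := fun i => |v i|) (fun _ _ => abs_nonneg _)
        (Finset.mem_univ i)
      exact abs_nonpos_iff.1 (this.trans (by exact_mod_cast hv))
    exact ⟨fun _ => x, rfl, by simp [hv0], fun _ => Or.inl rfl, by simp [hv0]⟩
  | succ n ih =>
    intro v hv x
    by_cases h0 : ∀ i, v i = 0
    · refine ⟨fun _ => x, rfl, by simp [h0], fun _ => Or.inl rfl, fun i => ?_⟩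
      rw [h0, Int.cast_zero]
      exact Finset.sum_eq_zero fun k _ => (H1_locClosed H (F.mem i)).self x
    · obtain ⟨j, hj⟩ := not_forall.1 h0
      -- the first step moves in direction `j` with the sign of `v j`
      obtain ⟨s, hs, hstep⟩ : ∃ s : ℤˣ, |v j - s| = |v j| - 1 ∧
          ∀ x, IsStep β j s x (a j ^ (s : ℤ) * x) := by
        rcases lt_or_gt_of_ne hj with hneg | hpos
        · refine ⟨-1, ?_, fun x => ?_⟩
          · rw [abs_of_neg hneg, abs_of_nonpos (by simp; omega)]
            simp; omega
          · have := F.step_anti (ha j ((a j)⁻¹ * x))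
            rw [mul_inv_cancel_left] at this
            simpa using this
        · refine ⟨1, ?_, fun x => by simpa using ha j x⟩
          rw [abs_of_pos hpos, abs_of_nonneg (by simp; omega)]
          simp
      let v' : Fin m → ℤ := v - Pi.single j (s : ℤ)
      have hv' : ∀ i, v i = v' i + (Pi.single j (s : ℤ) : Fin m → ℤ) i := fun i => by simp [v']
      have hsum : ∑ i, |v' i| = ∑ i, |v i| - 1 := by
        rw [← Finset.add_sum_erase _ _ (Finset.mem_univ j),
          ← Finset.add_sum_erase _ (fun i => |v i|) (Finset.mem_univ j)]
        have h1 : v' j = v j - s := by simp [v']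
        rw [h1, hs, Finset.sum_congr rfl fun i hi => by
          rw [show v' i = v i by simp [v', Finset.ne_of_mem_erase hi]]]
        ring
      obtain ⟨c, hc0, hcn, hc, hβ⟩ := ih v' (by rw [hsum]; push_cast at hv; linarith)
        (a j ^ (s : ℤ) * x)
      refine ⟨fun k => Nat.casesOn k x c, rfl, ?_, ?_, fun i => ?_⟩
      · show c n = _
        have hprod : ∏ i, a i ^ v i = (∏ i, a i ^ v' i) *
            ∏ i, a i ^ (Pi.single j (s : ℤ) : Fin m → ℤ) i := by
          rw [← Finset.prod_mul_distrib]
          exact Finset.prod_congr rfl fun i _ => by rw [hv' i, zpow_add]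
        rw [hcn, hprod, mul_assoc]
        congr 2
        symm
        rw [Finset.prod_eq_single j (fun i _ hi => by simp [hi]) (by simp)]
        simp
      · rintro (_ | k)
        · show Lazy w x (c 0)
          rw [hc0]
          exact Or.inr (F.adj (hstep x))
        · exact hc k
      · rw [Finset.sum_range_succ']
        show ∑ k ∈ Finset.range n, β i (c k) (c (k + 1)) + β i x (c 0) = _
        rw [hβ, hc0, hstep x i, hv' i]
        by_cases hij : i = j
        · subst hij; simp
        · simp [hij]

/-- The sharp case yields the torus structure. -/
lemma torus_of_sharp [Nonempty V] (H : CombGraph w μ d) (hκ : NonnegCurv w μ d)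
    (hm : betti1 w μ d = m) (hdeg : 2 * m = degMax w) :
    ∃ (_ : CommGroup V) (a : Fin m → V), CombTorusCond a w μ := by
  obtain ⟨β, F⟩ := exists_frame H hκ hm hdeg
  obtain ⟨o⟩ := ‹Nonempty V›
  have : Nonempty V := ⟨o⟩
  have hcomm : ∀ i j, F.shift i * F.shift j = F.shift j * F.shift i := by
    intro i j
    by_cases hij : i = j
    · rw [hij]
    · exact Equiv.ext fun x => (F.square H hκ hij 1 1 x).1
  have htrans : ∀ y, ∃ g ∈ Subgroup.closure (Set.range F.shift), g o = y := by
    intro y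
    obtain ⟨n, c, hc0, hcn, hc⟩ := H.conn o y
    have : ∀ i : Fin (n + 1), ∃ g ∈ Subgroup.closure (Set.range F.shift), g o = c i := by
      intro i
      induction i using Fin.induction with
      | zero => exact ⟨1, one_mem _, hc0.symm⟩
      | succ i ih =>
        obtain ⟨g, hg, hgi⟩ := ih
        obtain ⟨j, s, hj⟩ := F.exists_eq_nb (hc i)
        have hσ : F.shift j ∈ Subgroup.closure (Set.range F.shift) :=
          Subgroup.subset_closure ⟨j, rfl⟩
        rcases Int.units_eq_one_or s with rfl | rfl
        · refine ⟨F.shift j * g, mul_mem hσ hg, ?_⟩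
          rw [hj, ← hgi]; rfl
        · refine ⟨(F.shift j)⁻¹ * g, mul_mem (inv_mem hσ) hg, ?_⟩
          rw [hj, ← hgi]; rfl
    exact hcn ▸ this (Fin.last n)
  obtain ⟨instV, a, hgen, ha⟩ := exists_commGroup F.shift hcomm o htrans
  have ha1 : ∀ i x, a i * x = F.nb x i 1 := ha
  have ha2 : ∀ i x, (a i)⁻¹ * x = F.nb x i (-1) := fun i x => by
    rw [inv_mul_eq_iff_eq_mul, ha1]
    simpa using (F.nb_nb x i (-1)).symm
  have hz : ∀ i (ε : ℤ), (ε = 1 ∨ ε = -1) → ∃ s, ∀ x : V, a i ^ ε * x = F.nb x i s := by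
    rintro i ε (rfl | rfl)
    · exact ⟨1, fun x => by rw [zpow_one, ha1]⟩
    · exact ⟨-1, fun x => by rw [zpow_neg_one, ha2]⟩
  refine ⟨instV, a, hgen, fun x y => ⟨fun h => ?_, ?_⟩, fun x i => ?_, ?_, ?_⟩
  · obtain ⟨i, s, rfl⟩ := F.exists_eq_nb h
    refine ⟨i, ?_⟩
    rw [ha1, ha2]
    rcases Int.units_eq_one_or s with rfl | rfl
    · exact Or.inl rfl
    · exact Or.inr rfl
  · rintro ⟨i, rfl | rfl⟩
    · rw [ha1]; exact F.adj (F.nb_step x i 1)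
    · rw [ha2]; exact F.adj (F.nb_step x i (-1))
  · rw [ha1, ha2]; exact F.w_symm H x i
  · intro x i j ε₁ ε₂ hij h1 h2
    obtain ⟨s, hs⟩ := hz i ε₁ h1
    obtain ⟨t, ht⟩ := hz j ε₂ h2
    rw [hs, hs, ht]
    exact F.p_eq H hκ hij s t x
  · intro v hpos hle hprod
    obtain ⟨c, hc0, hc5, hc, hβ⟩ := F.exists_walk H
      (fun i x => by rw [ha1]; exact F.nb_step x i 1) 5 v (by exact_mod_cast hle) o
    rw [hprod, one_mul, ← hc0] at hc5
    have hv0 : ∀ i, v i = 0 := by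
      intro i
      have h := (H1_locClosed H (F.mem i)).pent _ _ _ _ _ (hc 0) (hc 1) (hc 2) (hc 3)
        (by rw [← hc5]; exact hc 4)
      have h' := hβ i
      simp only [Finset.sum_range_succ, Finset.sum_range_zero, zero_add, Nat.reduceAdd] at h' h
      rw [hc5, h] at h'
      exact_mod_cast h'.symm
    simp [hv0] at hpos

end Torus
end Paper

/-! ### Sharpness of torus graphs -/

namespace Paper
open Filter Topology

section Converse
variable {V : Type*} {m : ℕ}

lemma sum_units {M : Type*} [AddCommMonoid M] (t : ℤˣ) (φ : ℤˣ → M) :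
    ∑ s, φ s = φ t + φ (-t) := by
  rcases Int.units_eq_one_or t with rfl | rfl
  · rw [UnitsInt.univ, Finset.sum_pair (by decide)]
  · rw [neg_neg, add_comm, UnitsInt.univ, Finset.sum_pair (by decide)]

/-- The coordinate forms of a torus structure: on the step from `x` to `a_i ^ s * x`, the `k`-th form
takes the value `s` if `k = i` and `0` otherwise. -/
noncomputable def coordForm [CommGroup V] (a : Fin m → V) (k : Fin m) (x y : V) : ℝ :=
  open Classical in
  if h : ∃ q : Fin m × ℤˣ, y = a q.1 ^ (q.2 : ℤ) * x then
    if k = h.choose.1 then (h.choose.2 : ℤ) else 0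
  else 0

variable [Fintype V] {w : V → V → ℝ} {μ : V → ℝ} {d : V → V → ℝ}

namespace CombTorusCond
variable [CommGroup V] {a : Fin m → V}

lemma adj_iff (hT : CombTorusCond a w μ) (x y : V) :
    Adj w x y ↔ ∃ (i : Fin m) (s : ℤˣ), y = a i ^ (s : ℤ) * x := by
  rw [hT.2.1]
  refine exists_congr fun i => ⟨?_, ?_⟩
  · rintro (h | h)
    · exact ⟨1, by simpa using h⟩
    · exact ⟨-1, by simpa using h⟩
  · rintro ⟨s, h⟩
    rcases Int.units_eq_one_or s with rfl | rfl
    · left; simpa using h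
    · right; simpa using h

/-- A trivial product of at most five signed generators is trivial in each coordinate. -/
lemma relation (hT : CombTorusCond a w μ) {ι : Type*} (T : Finset ι) (q : ι → Fin m × ℤˣ)
    (hcard : T.card ≤ 5) (hprod : ∏ l ∈ T, a (q l).1 ^ ((q l).2 : ℤ) = 1) (k : Fin m) :
    ∑ l ∈ T, (if k = (q l).1 then ((q l).2 : ℤ) else 0) = 0 := by
  let v : Fin m → ℤ := fun k => ∑ l ∈ T, if k = (q l).1 then ((q l).2 : ℤ) else 0
  have hword : ∏ k, a k ^ v k = 1 := by
    have h1 : ∀ k, a k ^ v k = ∏ l ∈ T, a k ^ (if k = (q l).1 then ((q l).2 : ℤ) else 0) :=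
      fun k => map_sum (zpowersHom V (a k)).toAdditiveRight _ _
    rw [Finset.prod_congr rfl fun k _ => h1 k, Finset.prod_comm, ← hprod]
    refine Finset.prod_congr rfl fun l _ => ?_
    rw [Finset.prod_eq_single (q l).1 (fun k _ hk => by rw [if_neg hk, zpow_zero]) (by simp),
      if_pos rfl]
  have hnorm : ∑ k, |v k| ≤ 5 := by
    calc ∑ k, |v k| ≤ ∑ k, ∑ l ∈ T, |if k = (q l).1 then ((q l).2 : ℤ) else 0| :=
          Finset.sum_le_sum fun k _ => Finset.abs_sum_le_sum_abs _ _
      _ = ∑ l ∈ T, ∑ k, |if k = (q l).1 then ((q l).2 : ℤ) else 0| := Finset.sum_comm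
      _ = ∑ l ∈ T, 1 := by
          refine Finset.sum_congr rfl fun l _ => ?_
          rw [Finset.sum_eq_single (q l).1 (fun k _ hk => by rw [if_neg hk, abs_zero]) (by simp),
            if_pos rfl]
          rcases Int.units_eq_one_or (q l).2 with h | h <;> rw [h] <;> rfl
      _ ≤ 5 := by simpa using by exact_mod_cast hcard
  have h0 : ∑ k, |v k| = 0 := by
    by_contra hne
    exact hT.2.2.2.2 v (lt_of_le_of_ne (Finset.sum_nonneg fun _ _ => abs_nonneg _)
      (Ne.symm hne)) hnorm hword
  exact abs_eq_zero.1 ((Finset.sum_eq_zero_iff_of_nonneg fun _ _ => abs_nonneg _).1 h0 k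
    (Finset.mem_univ k))

/-- The signed generators are pairwise distinct. -/
lemma gen_inj (hT : CombTorusCond a w μ) {i j : Fin m} {s t : ℤˣ}
    (h : a i ^ (s : ℤ) = a j ^ (t : ℤ)) : i = j ∧ s = t := by
  have key : (if i = i then (s : ℤ) else 0) + (if i = j then ((-t : ℤˣ) : ℤ) else 0) = 0 := by
    have h2 := hT.relation (Finset.univ : Finset (Fin 2)) ![(i, s), (j, -t)] (by simp)
      (by simp [Fin.prod_univ_two, h]) i
    rw [Fin.sum_univ_two] at h2
    exact h2
  rw [if_pos rfl, Units.val_neg] at key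
  by_cases hij : i = j
  · rw [if_pos hij] at key
    exact ⟨hij, Units.ext (by linarith)⟩
  · rw [if_neg hij, add_zero] at key
    exact absurd key s.ne_zero

lemma coordForm_step (hT : CombTorusCond a w μ) (i : Fin m) (s : ℤˣ) (x : V) :
    IsStep (coordForm a) i s x (a i ^ (s : ℤ) * x) := by
  intro k
  have h : ∃ q : Fin m × ℤˣ, a i ^ (s : ℤ) * x = a q.1 ^ (q.2 : ℤ) * x := ⟨(i, s), rfl⟩
  obtain ⟨h1, h2⟩ := hT.gen_inj (mul_right_cancel h.choose_spec)
  rw [coordForm, dif_pos h, ← h1, ← h2]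

lemma coordForm_zero (hT : CombTorusCond a w μ) (k : Fin m) {x y : V} (h : ¬Adj w x y) :
    coordForm a k x y = 0 := by
  rw [coordForm, dif_neg]
  rintro ⟨q, hq⟩
  exact h ((hT.adj_iff x y).2 ⟨q.1, q.2, hq⟩)

/-- Sums over the neighbours of `x` are sums over signed generators. -/
lemma sum_nb (hT : CombTorusCond a w μ) (x : V) (φ : V → ℝ) (hφ : ∀ z, ¬Adj w x z → φ z = 0) :
    ∑ z, φ z = ∑ i, ∑ s : ℤˣ, φ (a i ^ (s : ℤ) * x) := by
  rw [← Fintype.sum_prod_type' fun (i : Fin m) (s : ℤˣ) => φ (a i ^ (s : ℤ) * x)]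
  symm
  refine Finset.sum_of_injOn (fun q : Fin m × ℤˣ => a q.1 ^ (q.2 : ℤ) * x) ?_
    (fun _ _ => Finset.mem_coe.2 (Finset.mem_univ _)) (fun z _ hz => hφ z fun h => hz ?_) (fun _ _ => rfl)
  · intro q _ r _ hqr
    obtain ⟨h1, h2⟩ := hT.gen_inj (mul_right_cancel hqr)
    exact Prod.ext h1 h2
  · obtain ⟨i, s, rfl⟩ := (hT.adj_iff x z).1 h
    exact ⟨(i, s), by simp, rfl⟩

lemma deg_eq (hT : CombTorusCond a w μ) (x : V) : deg w x = 2 * m := by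
  have hbij : Function.Bijective (fun q : Fin m × ℤˣ =>
      (⟨a q.1 ^ (q.2 : ℤ) * x, (hT.adj_iff _ _).2 ⟨q.1, q.2, rfl⟩⟩ : {y // Adj w x y})) := by
    refine ⟨fun q r hqr => ?_, fun y => ?_⟩
    · obtain ⟨h1, h2⟩ := hT.gen_inj (mul_right_cancel (congrArg Subtype.val hqr))
      exact Prod.ext h1 h2
    · obtain ⟨i, s, h⟩ := (hT.adj_iff _ _).1 y.2
      exact ⟨(i, s), Subtype.ext h.symm⟩
  rw [deg, ← Nat.card_congr (Equiv.ofBijective _ hbij)]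
  simp [mul_comm]

/-- The two steps in direction `i` are equally likely. -/
lemma w_symm (hT : CombTorusCond a w μ) (x : V) (i : Fin m) (s : ℤˣ) :
    w x (a i ^ ((-s : ℤˣ) : ℤ) * x) = w x (a i ^ (s : ℤ) * x) := by
  have := hT.2.2.1 x i
  rcases Int.units_eq_one_or s with rfl | rfl <;> simp [this]

/-- Non-negative curvature: along an edge in direction `j`, the two steps in direction `j` are
compared by the one-dimensional estimate, and all other steps are translated in parallel. -/
lemma nonnegCurv (hT : CombTorusCond a w μ) (H : CombGraph w μ d) : NonnegCurv w μ d := by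
  refine H.nonneg_of fun x y hxy f hf hfxy => ?_
  obtain ⟨j, t, rfl⟩ := (hT.adj_iff x y).1 hxy
  set y := a j ^ (t : ℤ) * x with hy
  have hlap : ∀ u, lap w μ f u = ∑ i, ∑ s : ℤˣ,
      w u (a i ^ (s : ℤ) * u) / μ u * (f (a i ^ (s : ℤ) * u) - f u) := fun u =>
    hT.sum_nb u (fun z => w u z / μ u * (f z - f u)) fun z hz => by rw [H.p_zero hz, zero_mul]
  have hadj : ∀ u i (s : ℤˣ), Adj w u (a i ^ (s : ℤ) * u) := fun u i s =>
    (hT.adj_iff _ _).2 ⟨i, s, rfl⟩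
  rw [hlap, hlap]
  refine Finset.sum_le_sum fun i _ => ?_
  by_cases hij : i = j
  · subst hij
    have hyx : a i ^ ((-t : ℤˣ) : ℤ) * y = x := by
      rw [hy, ← mul_assoc, ← zpow_add]; simp
    refine le_trans (b := 0) ?_ ?_
    · rw [sum_units t, hT.w_symm y i t, hyx, ← mul_add]
      refine mul_nonpos_of_nonneg_of_nonpos (H.p_nonneg _ _) ?_
      linarith [hf _ _ (H.adj_symm (hadj y i t))]
    · rw [sum_units t, hT.w_symm x i t, ← mul_add]
      refine mul_nonneg (H.p_nonneg _ _) ?_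
      linarith [hf _ _ (hadj x i (-t))]
  · refine Finset.sum_le_sum fun s _ => ?_
    have hpq : ∀ s : ℤˣ, (s : ℤ) = 1 ∨ (s : ℤ) = -1 := fun s => by
      rcases Int.units_eq_one_or s with rfl | rfl <;> simp
    rw [hT.2.2.2.1 x i j s t hij (hpq s) (hpq t)]
    refine mul_le_mul_of_nonneg_left ?_ (H.p_nonneg _ _)
    have h1 := hf _ _ (H.adj_symm (hadj (a i ^ (s : ℤ) * x) j t))
    rw [mul_left_comm] at h1
    linarith

/-- The coordinate forms are harmonic. Cycles in `X₂` have length at most five, so they lift to closed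
walks in `ℤ^m`. -/
lemma coordForm_mem (hT : CombTorusCond a w μ) (H : CombGraph w μ d) (k : Fin m) :
    coordForm a k ∈ H1set w μ d := by
  have : Nonempty V := ⟨1⟩
  refine ⟨fun x y => ?_, fun x y h => hT.coordForm_zero k h, fun n c hc hX => ?_, fun x => ?_⟩
  · by_cases hxy : Adj w x y
    · obtain ⟨i, s, rfl⟩ := (hT.adj_iff x y).1 hxy
      have h1 := hT.coordForm_step i (-s) (a i ^ (s : ℤ) * x) k
      rw [← mul_assoc, ← zpow_add] at h1
      simp only [Units.val_neg, neg_add_cancel, zpow_zero, one_mul] at h1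
      rw [hT.coordForm_step i s x k, h1]
      split_ifs <;> simp
    · rw [hT.coordForm_zero k hxy, hT.coordForm_zero k fun h => hxy (H.adj_symm h), neg_zero]
  · have hn := X2_length H hc hX
    have hq : ∀ l, ∃ q : Fin m × ℤˣ, c (l + 1) = a q.1 ^ (q.2 : ℤ) * c l := fun l => by
      obtain ⟨i, s, h⟩ := (hT.adj_iff _ _).1 (hc.2 l)
      exact ⟨(i, s), h⟩
    choose q hq using hq
    have hprod : ∏ l, a (q l).1 ^ ((q l).2 : ℤ) = 1 := by
      have h1 : ∏ l, c (l + 1) = ∏ l, c l := Equiv.prod_comp (Equiv.addRight (1 : ZMod (n + 3))) c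
      rw [Finset.prod_congr rfl fun l _ => hq l, Finset.prod_mul_distrib] at h1
      exact mul_eq_right.1 h1
    have h0 := hT.relation (Finset.univ : Finset (ZMod (n + 3))) q
      (by rw [Finset.card_univ, ZMod.card]; omega) hprod k
    have : ∀ l, coordForm a k (c l) (c (l + 1)) =
        ((if k = (q l).1 then ((q l).2 : ℤ) else 0 : ℤ) : ℝ) := fun l => by
      rw [hq l, hT.coordForm_step (q l).1 (q l).2 (c l) k]
      split_ifs <;> simp
    rw [Finset.sum_congr rfl fun l _ => this l, ← Int.cast_sum, h0, Int.cast_zero]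
  · rw [hT.sum_nb x _ fun z hz => by rw [H.p_zero hz, zero_mul]]
    refine Finset.sum_eq_zero fun i _ => ?_
    rw [sum_units 1, hT.w_symm, hT.coordForm_step, hT.coordForm_step]
    split_ifs <;> simp

/-- The coordinate forms are `m` independent harmonic forms, and `2 β₁ ≤ deg = 2m`. -/
lemma betti_eq (hT : CombTorusCond a w μ) (H : CombGraph w μ d) : betti1 w μ d = m := by
  have : Nonempty V := ⟨1⟩
  refine le_antisymm ?_ ?_
  · have := two_betti_le H (hT.nonnegCurv H) (1 : V)
    rw [hT.deg_eq] at this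
    omega
  · have hli : LinearIndependent ℝ
        (fun k => (⟨coordForm a k, hT.coordForm_mem H k⟩ : H1sub w μ d)) := by
      rw [Fintype.linearIndependent_iff]
      intro r hr i
      have h1 := congrArg (ev w μ d 1 (a i ^ ((1 : ℤˣ) : ℤ) * 1)) hr
      rw [map_sum, map_zero] at h1
      simp only [map_smul, ev_apply, smul_eq_mul] at h1
      rw [Finset.sum_congr rfl fun k _ => by rw [hT.coordForm_step i 1 1 k]] at h1
      simpa using h1
    rw [betti1_eq]
    simpa using hli.fintype_card_le_finrank

end CombTorusCond
end Converse
end Paper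

open Paper in
/-- **Corollary (Betti-sharpness for the combinatorial path distance).**
Let `G = (V, w, μ)` be a finite connected weighted graph and let `d` be the combinatorial path
distance (the path distance in which every edge has length 1). Then `G` is Ollivier-Betti
sharp with `β₁(M₂(G)) = m` if and only if `V` carries an abelian group structure with
generators `a_1,…,a_m` satisfying conditions (i)–(iv) above. -/
theorem ollivierBettiSharp_iff_combTorus
    {V : Type*} [instF : Fintype V] [Nonempty V] (w : V → V → ℝ) (μ : V → ℝ) (d : V → V → ℝ)
    (hG : IsWeightedGraph w μ) (hconn : GraphConnected w)
    (hd : IsPathDistance w d) (hcomb : ∀ x y, Adj w x y → d x y = 1)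
    (m : ℕ) :
    (NonnegCurv w μ d ∧ 2 * betti1 w μ d = degMax w ∧ betti1 w μ d = m) ↔
      ∃ (instC : CommGroup V) (a : Fin m → V), @CombTorusCond V instF instC m a w μ := by
  have H : CombGraph w μ d := ⟨hG, hconn, hd, hcomb⟩
  constructor
  · rintro ⟨hκ, hdeg, hm⟩
    exact torus_of_sharp H hκ hm (hm ▸ hdeg)
  · rintro ⟨instC, a, hT⟩
    refine ⟨hT.nonnegCurv H, ?_, hT.betti_eq H⟩
    rw [hT.betti_eq H]
    simp only [degMax, hT.deg_eq, ciSup_const]
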